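/- arXiv:1610.06760 — 5 statements merged into one kernel-verified Lean document; each statement's English description precedes it below -/
import Mathlib

section
/- Let ν be a probability measure on the interval [0,2π] and let λ be a real number. Then for all positive integers n and m, the quantity |λ·(∫₀^{2π} e^{int} dν(t))·(∫₀^{2π} e^{imt} dν(t)) − ∫₀^{2π} e^{i(n+m)t} dν(t)| is at most 1 when 0 ≤ λ ≤ 2, and is at most |λ − 1| when λ < 0 or λ > 2. -/
open MeasureTheory

/-!
On `L²(μ)` let `P` be the orthogonal projection onto the constants, that is, the mean. Then
`l • P - 1 = (l - 1) • P - (1 - P)` has operator norm at most `max 1 ‖l - 1‖`, and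
`l • (∫ f) • (∫ g) - ∫ f • g = ∫ f • (l • P g - g)`, so Cauchy–Schwarz bounds this by
`max 1 ‖l - 1‖ * ‖f‖₂ * ‖g‖₂`. The exponentials have `L²` norm one, and for real `l` the
maximum is `1` or `|l - 1|` according to whether `0 ≤ l ≤ 2`.
-/

section L2

variable {Ω 𝕜 E : Type*} [MeasurableSpace Ω] {μ : Measure Ω} [RCLike 𝕜]
  [NormedAddCommGroup E]

theorem norm_integral_smul_le_sqrt_mul_sqrt [NormedSpace ℝ E] [NormedSpace 𝕜 E]
    {f : Ω → 𝕜} {h : Ω → E} (hf : MemLp f 2 μ) (hh : MemLp h 2 μ) :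
    ‖∫ t, f t • h t ∂μ‖ ≤ √(∫ t, ‖f t‖ ^ 2 ∂μ) * √(∫ t, ‖h t‖ ^ 2 ∂μ) :=
  calc ‖∫ t, f t • h t ∂μ‖
      ≤ ∫ t, ‖f t • h t‖ ∂μ := norm_integral_le_integral_norm _
    _ = ∫ t, ‖f t‖ * ‖h t‖ ∂μ := by simp only [norm_smul]
    _ ≤ √(∫ t, ‖f t‖ ^ 2 ∂μ) * √(∫ t, ‖h t‖ ^ 2 ∂μ) := by
      have holder := integral_mul_le_Lp_mul_Lq_of_nonneg Real.HolderConjugate.two_two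
        (.of_forall fun t ↦ norm_nonneg (f t)) (.of_forall fun t ↦ norm_nonneg (h t))
        (by simpa using hf.norm) (by simpa using hh.norm)
      simpa only [Real.sqrt_eq_rpow, Real.rpow_two] using holder

variable [InnerProductSpace ℝ E] [CompleteSpace E] [IsProbabilityMeasure μ]

theorem integral_norm_const_add_sq_of_integral_eq_zero
    {h : Ω → E} (hh : MemLp h 2 μ) (h_mean : ∫ t, h t ∂μ = 0) (c : E) :
    ∫ t, ‖c + h t‖ ^ 2 ∂μ = ‖c‖ ^ 2 + ∫ t, ‖h t‖ ^ 2 ∂μ := by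
  have h_int : Integrable h μ := hh.integrable one_le_two
  have cross_int : Integrable (fun t ↦ 2 * inner ℝ c (h t)) μ :=
    (h_int.const_inner c).const_mul 2
  have cross_eq_zero : ∫ t, 2 * inner ℝ c (h t) ∂μ = 0 := by
    rw [integral_const_mul, integral_inner h_int, h_mean, inner_zero_right, mul_zero]
  have sq_int : Integrable (fun t ↦ ‖h t‖ ^ 2) μ := hh.norm.integrable_sq
  calc ∫ t, ‖c + h t‖ ^ 2 ∂μ
      = ∫ t, (‖c‖ ^ 2 + (2 * inner ℝ c (h t) + ‖h t‖ ^ 2)) ∂μ := by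
        simp only [norm_add_sq_real, add_assoc]
    _ = ‖c‖ ^ 2 + (∫ t, 2 * inner ℝ c (h t) ∂μ + ∫ t, ‖h t‖ ^ 2 ∂μ) := by
        rw [integral_add (integrable_const _) (cross_int.fun_add sq_int),
          integral_add cross_int sq_int]
        simp
    _ = ‖c‖ ^ 2 + ∫ t, ‖h t‖ ^ 2 ∂μ := by rw [cross_eq_zero, zero_add]

variable [NormedSpace 𝕜 E]

theorem integral_norm_smul_integral_sub_sq_le {g : Ω → E} (hg : MemLp g 2 μ) (l : 𝕜) :
    ∫ t, ‖l • (∫ s, g s ∂μ) - g t‖ ^ 2 ∂μ ≤ max 1 ‖l - 1‖ ^ 2 * ∫ t, ‖g t‖ ^ 2 ∂μ := by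
  set b := ∫ s, g s ∂μ with hb
  have dev_memLp : MemLp (fun t ↦ b - g t) 2 μ := (memLp_const b).sub hg
  have dev_mean : ∫ t, (b - g t) ∂μ = 0 := by
    rw [integral_sub (integrable_const b) (hg.integrable one_le_two), ← hb]
    simp
  have pythagoras := integral_norm_const_add_sq_of_integral_eq_zero dev_memLp dev_mean
  have dev_nonneg : 0 ≤ ∫ t, ‖b - g t‖ ^ 2 ∂μ := integral_nonneg fun t ↦ sq_nonneg _
  have one_le : (1 : ℝ) ≤ max 1 ‖l - 1‖ ^ 2 := one_le_pow₀ (le_max_left _ _)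
  calc ∫ t, ‖l • b - g t‖ ^ 2 ∂μ
      = ∫ t, ‖(l - 1) • b + (b - g t)‖ ^ 2 ∂μ := by
        congr! 4 with t
        module
    _ = ‖l - 1‖ ^ 2 * ‖b‖ ^ 2 + ∫ t, ‖b - g t‖ ^ 2 ∂μ := by
        rw [pythagoras, norm_smul, mul_pow]
    _ ≤ max 1 ‖l - 1‖ ^ 2 * ‖b‖ ^ 2 + max 1 ‖l - 1‖ ^ 2 * ∫ t, ‖b - g t‖ ^ 2 ∂μ := by
        gcongr
        · exact le_max_right _ _
        · exact le_mul_of_one_le_left dev_nonneg one_le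
    _ = max 1 ‖l - 1‖ ^ 2 * ∫ t, ‖-b + (b - g t)‖ ^ 2 ∂μ := by
        rw [pythagoras, norm_neg, mul_add]
    _ = max 1 ‖l - 1‖ ^ 2 * ∫ t, ‖g t‖ ^ 2 ∂μ := by
        simp only [sub_eq_add_neg, neg_add_cancel_left, norm_neg]

theorem norm_smul_integral_smul_integral_sub_integral_smul_le
    {f : Ω → 𝕜} {g : Ω → E} (hf : MemLp f 2 μ) (hg : MemLp g 2 μ) (l : 𝕜) :
    ‖l • (∫ t, f t ∂μ) • (∫ t, g t ∂μ) - ∫ t, f t • g t ∂μ‖ ≤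
      max 1 ‖l - 1‖ * (√(∫ t, ‖f t‖ ^ 2 ∂μ) * √(∫ t, ‖g t‖ ^ 2 ∂μ)) := by
  set b := ∫ t, g t ∂μ
  have f_int : Integrable f μ := hf.integrable one_le_two
  have fg_int : Integrable (fun t ↦ f t • g t) μ := memLp_one_iff_integrable.1 (hg.smul hf)
  calc ‖l • (∫ t, f t ∂μ) • b - ∫ t, f t • g t ∂μ‖
      = ‖∫ t, f t • (l • b - g t) ∂μ‖ := by
        simp only [smul_sub]
        rw [integral_sub (f_int.smul_const _) fg_int, integral_smul_const, smul_comm l]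
    _ ≤ √(∫ t, ‖f t‖ ^ 2 ∂μ) * √(∫ t, ‖l • b - g t‖ ^ 2 ∂μ) :=
        norm_integral_smul_le_sqrt_mul_sqrt hf ((memLp_const _).sub hg)
    _ ≤ √(∫ t, ‖f t‖ ^ 2 ∂μ) * √(max 1 ‖l - 1‖ ^ 2 * ∫ t, ‖g t‖ ^ 2 ∂μ) := by
        gcongr
        exact integral_norm_smul_integral_sub_sq_le hg l
    _ = max 1 ‖l - 1‖ * (√(∫ t, ‖f t‖ ^ 2 ∂μ) * √(∫ t, ‖g t‖ ^ 2 ∂μ)) := by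
        rw [Real.sqrt_mul (sq_nonneg _), Real.sqrt_sq (by positivity), mul_left_comm]

end L2

theorem memLp_exp_I_mul_ofReal {Ω : Type*} [MeasurableSpace Ω] {μ : Measure Ω}
    [IsFiniteMeasure μ] {X : Ω → ℝ} (hX : AEMeasurable X μ) (p : ENNReal) :
    MemLp (fun t ↦ Complex.exp (Complex.I * X t)) p μ :=
  .of_bound (by fun_prop) 1 (.of_forall fun t ↦ (Complex.norm_exp_I_mul_ofReal (X t)).le)

theorem generalized_zalcman_measure_lemma_general {Ω : Type*} [MeasurableSpace Ω]
    {μ : Measure Ω} [IsProbabilityMeasure μ] {X Y : Ω → ℝ}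
    (hX : AEMeasurable X μ) (hY : AEMeasurable Y μ) (l : ℂ) :
    ‖l * (∫ t, Complex.exp (Complex.I * X t) ∂μ) * (∫ t, Complex.exp (Complex.I * Y t) ∂μ) -
        ∫ t, Complex.exp (Complex.I * (X t + Y t)) ∂μ‖ ≤ max 1 ‖l - 1‖ := by
  simpa only [Complex.norm_exp_I_mul_ofReal, one_pow, integral_const, probReal_univ, smul_eq_mul,
    mul_one, Real.sqrt_one, ← Complex.exp_add, ← mul_add, ← mul_assoc] using
    norm_smul_integral_smul_integral_sub_integral_smul_le
      (memLp_exp_I_mul_ofReal hX 2) (memLp_exp_I_mul_ofReal hY 2) l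

theorem generalized_zalcman_measure_lemma
    (ν : Measure (Set.Icc (0 : ℝ) (2 * Real.pi))) [IsProbabilityMeasure ν]
    (lam : ℝ) (n m : ℕ) (hn : 1 ≤ n) (hm : 1 ≤ m) :
    (0 ≤ lam ∧ lam ≤ 2 →
      ‖(lam : ℂ) * (∫ t, Complex.exp (Complex.I * n * ((t : ℝ) : ℂ)) ∂ν) *
          (∫ t, Complex.exp (Complex.I * m * ((t : ℝ) : ℂ)) ∂ν) -
        ∫ t, Complex.exp (Complex.I * (n + m) * ((t : ℝ) : ℂ)) ∂ν‖ ≤ 1) ∧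
    (lam < 0 ∨ 2 < lam →
      ‖(lam : ℂ) * (∫ t, Complex.exp (Complex.I * n * ((t : ℝ) : ℂ)) ∂ν) *
          (∫ t, Complex.exp (Complex.I * m * ((t : ℝ) : ℂ)) ∂ν) -
        ∫ t, Complex.exp (Complex.I * (n + m) * ((t : ℝ) : ℂ)) ∂ν‖ ≤ |lam - 1|) := by
  have norm_le_max := generalized_zalcman_measure_lemma_general (μ := ν)
    (X := fun t ↦ n * t) (Y := fun t ↦ m * t) (by fun_prop) (by fun_prop) lam
  have norm_sub_one : ‖(lam : ℂ) - 1‖ = |lam - 1| := by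
    rw [← Complex.ofReal_one, ← Complex.ofReal_sub, Complex.norm_real, Real.norm_eq_abs]
  simp only [Complex.ofReal_mul, Complex.ofReal_natCast, ← add_mul, ← mul_assoc,
    norm_sub_one] at norm_le_max
  refine ⟨fun h ↦ ?_, fun h ↦ ?_⟩
  · rwa [max_eq_left (abs_le.2 (by grind))] at norm_le_max
  · rwa [max_eq_right (le_abs'.2 (by grind))] at norm_le_max
end

section
/- Fix a real number α < 1 and for n ≥ 2 set A_n = (1/(n−1)!)·∏_{j=0}^{n−2} (2(1−α)+j), with A_1 = 1. Suppose the complex numbers (a_n)_{n≥2} satisfy a_n = A_n · ∫₀^{2π} e^{i(n−1)t} dν(t) for all n ≥ 2, for some probability measure ν on [0,2π]. Then for every real λ and all integers n, m ≥ 2: |λ a_n a_m − a_{n+m−1}| ≤ A_{n+m−1} whenever 0 ≤ λ ≤ 2A_{n+m−1}/(A_n A_m), and |λ a_n a_m − a_{n+m−1}| ≤ |λ A_n A_m − A_{n+m−1}| whenever λ < 0 or λ > 2A_{n+m−1}/(A_n A_m). -/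
open MeasureTheory

/-!
Let `c = ∫ f` for a Hilbert-space valued `f` with `‖f‖ ≤ 1` on a probability space. Reflection in
the mean preserves the second moment, `∫ ‖2c - f‖² = ∫ ‖f‖² ≤ 1`, so that `∫ ‖2c - f‖ ≤ 1`.
Integrating against a scalar function with `‖g‖ ≤ 1` gives `‖2x - y‖ ≤ 1` for `x = (∫ g) (∫ f)` and
`y = ∫ g f`. Since also `‖y‖ ≤ 1`, the decomposition `s x - b y = (s/2) (2x - y) + (s/2 - b) y`
yields `‖s x - b y‖ ≤ |s/2| + |s/2 - b| = max |b| |s - b|` for all real `s` and `b`. With `f` and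
`g` powers of `e^{it}`, `s = λ A_n A_m` and `b = A_{n+m-1}`, the two cases of the theorem are the
two possible values of the maximum.
-/

section IntegralReflection

variable {Ω E : Type*} [MeasurableSpace Ω] {μ : Measure Ω} [IsProbabilityMeasure μ]
  [NormedAddCommGroup E] [InnerProductSpace ℝ E] [CompleteSpace E] {f : Ω → E}

theorem integral_norm_sq_two_smul_integral_sub (hf : MemLp f 2 μ) :
    ∫ t, ‖(2 : ℝ) • (∫ s, f s ∂μ) - f t‖ ^ 2 ∂μ = ∫ t, ‖f t‖ ^ 2 ∂μ := by
  set c := ∫ s, f s ∂μ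
  have hf_int : Integrable f μ := hf.integrable one_le_two
  have hf_sq : Integrable (fun t ↦ ‖f t‖ ^ 2) μ := hf.integrable_norm_pow two_ne_zero
  have h_inner : Integrable (fun t ↦ 4 * inner ℝ c (f t)) μ := (hf_int.const_inner c).const_mul 4
  have h_diff : Integrable (fun t ↦ 4 * ‖c‖ ^ 2 - 4 * inner ℝ c (f t)) μ :=
    (integrable_const _).sub h_inner
  have h_expand (t : Ω) :
      ‖(2 : ℝ) • c - f t‖ ^ 2 = 4 * ‖c‖ ^ 2 - 4 * inner ℝ c (f t) + ‖f t‖ ^ 2 := by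
    rw [norm_sub_sq_real, norm_smul, real_inner_smul_left, Real.norm_ofNat]
    ring
  calc ∫ t, ‖(2 : ℝ) • c - f t‖ ^ 2 ∂μ
      = 4 * ‖c‖ ^ 2 - 4 * inner ℝ c c + ∫ t, ‖f t‖ ^ 2 ∂μ := by
        simp_rw [h_expand]
        rw [integral_add h_diff hf_sq, integral_sub (integrable_const _) h_inner,
          integral_const_mul 4 fun t ↦ inner ℝ c (f t), integral_inner hf_int, integral_const,
          probReal_univ, one_smul]
    _ = ∫ t, ‖f t‖ ^ 2 ∂μ := by
        rw [real_inner_self_eq_norm_sq, sub_self, zero_add]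

theorem integral_norm_two_smul_integral_sub_le_one (hf : AEStronglyMeasurable f μ)
    (hf_le : ∀ᵐ t ∂μ, ‖f t‖ ≤ 1) :
    ∫ t, ‖(2 : ℝ) • (∫ s, f s ∂μ) - f t‖ ∂μ ≤ 1 := by
  set c := ∫ s, f s ∂μ
  have hf_L2 : MemLp f 2 μ := .of_bound hf 1 hf_le
  have h_L2 : MemLp (fun t ↦ (2 : ℝ) • c - f t) 2 μ := (memLp_const _).sub hf_L2
  have h_sq : Integrable (fun t ↦ ‖(2 : ℝ) • c - f t‖ ^ 2) μ := h_L2.integrable_norm_pow two_ne_zero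
  have h_second_moment : ∫ t, ‖(2 : ℝ) • c - f t‖ ^ 2 ∂μ ≤ 1 := by
    rw [integral_norm_sq_two_smul_integral_sub hf_L2]
    have hf_sq_le : ∀ᵐ t ∂μ, ‖f t‖ ^ 2 ≤ 1 :=
      hf_le.mono fun t ht ↦ pow_le_one₀ (norm_nonneg _) ht
    simpa using
      integral_mono_ae (hf_L2.integrable_norm_pow two_ne_zero) (integrable_const 1) hf_sq_le
  calc ∫ t, ‖(2 : ℝ) • c - f t‖ ∂μ
      ≤ ∫ t, (1 + ‖(2 : ℝ) • c - f t‖ ^ 2) / 2 ∂μ := by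
        refine integral_mono (h_L2.integrable one_le_two).norm
          (((integrable_const 1).add h_sq).div_const 2) fun t ↦ ?_
        linarith [two_mul_le_add_sq 1 ‖(2 : ℝ) • c - f t‖]
    _ = (1 + ∫ t, ‖(2 : ℝ) • c - f t‖ ^ 2 ∂μ) / 2 := by
        rw [integral_div, integral_add (integrable_const _) h_sq]
        simp
    _ ≤ 1 := by linarith

theorem norm_integral_smul_two_smul_integral_sub_le_one {𝕜 : Type*} [RCLike 𝕜] [NormedSpace 𝕜 E]
    {g : Ω → 𝕜} (hf : AEStronglyMeasurable f μ) (hf_le : ∀ᵐ t ∂μ, ‖f t‖ ≤ 1)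
    (hg : AEStronglyMeasurable g μ) (hg_le : ∀ᵐ t ∂μ, ‖g t‖ ≤ 1) :
    ‖(∫ t, g t ∂μ) • (2 : ℝ) • (∫ t, f t ∂μ) - ∫ t, g t • f t ∂μ‖ ≤ 1 := by
  set c := ∫ t, f t ∂μ
  have hf_int : Integrable f μ := .of_bound hf 1 hf_le
  have hg_int : Integrable g μ := .of_bound hg 1 hg_le
  have hgf_int : Integrable (fun t ↦ g t • f t) μ := hf_int.bdd_smul 1 hg hg_le
  have h_sub : Integrable (fun t ↦ (2 : ℝ) • c - f t) μ := (integrable_const _).sub hf_int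
  calc ‖(∫ t, g t ∂μ) • (2 : ℝ) • c - ∫ t, g t • f t ∂μ‖
      = ‖∫ t, g t • ((2 : ℝ) • c - f t) ∂μ‖ := by
        simp_rw [smul_sub]
        rw [integral_sub (hg_int.smul_const _) hgf_int, integral_smul_const]
    _ ≤ ∫ t, ‖(2 : ℝ) • c - f t‖ ∂μ := by
        refine norm_integral_le_of_norm_le h_sub.norm (hg_le.mono fun t ht ↦ ?_)
        rw [norm_smul]
        exact mul_le_of_le_one_left (norm_nonneg _) ht
    _ ≤ 1 := integral_norm_two_smul_integral_sub_le_one hf hf_le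

end IntegralReflection

theorem abs_add_abs_eq_max_abs_add_abs_sub {G : Type*} [AddCommGroup G] [LinearOrder G]
    [IsOrderedAddMonoid G] (a b : G) : |a| + |b| = max |a + b| |a - b| := by
  grind

theorem norm_smul_sub_smul_le_max {E : Type*} [SeminormedAddCommGroup E] [NormedSpace ℝ E] {x y : E}
    (hxy : ‖(2 : ℝ) • x - y‖ ≤ 1) (hy : ‖y‖ ≤ 1) (s b : ℝ) :
    ‖s • x - b • y‖ ≤ max |b| |s - b| := by
  calc ‖s • x - b • y‖
      = ‖(s / 2) • ((2 : ℝ) • x - y) + (s / 2 - b) • y‖ := by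
        congr 1
        module
    _ ≤ ‖(s / 2) • ((2 : ℝ) • x - y)‖ + ‖(s / 2 - b) • y‖ := norm_add_le _ _
    _ ≤ |s / 2| + |s / 2 - b| := by
        rw [norm_smul, norm_smul, Real.norm_eq_abs, Real.norm_eq_abs]
        exact add_le_add (mul_le_of_le_one_right (abs_nonneg _) hxy)
          (mul_le_of_le_one_right (abs_nonneg _) hy)
    _ = max |b| |s - b| := by
        rw [abs_add_abs_eq_max_abs_add_abs_sub, max_comm, sub_sub_cancel]
        congr 2
        ring

theorem norm_mul_integral_mul_integral_sub_le_max {Ω : Type*} [MeasurableSpace Ω] {μ : Measure Ω}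
    [IsProbabilityMeasure μ] {f g : Ω → ℂ}
    (hf : AEStronglyMeasurable f μ) (hf_le : ∀ᵐ t ∂μ, ‖f t‖ ≤ 1)
    (hg : AEStronglyMeasurable g μ) (hg_le : ∀ᵐ t ∂μ, ‖g t‖ ≤ 1) (s b : ℝ) :
    ‖(s : ℂ) * ((∫ t, f t ∂μ) * ∫ t, g t ∂μ) - b * ∫ t, f t * g t ∂μ‖ ≤ max |b| |s - b| := by
  have h_reflect : ‖(2 : ℝ) • ((∫ t, f t ∂μ) * ∫ t, g t ∂μ) - ∫ t, f t * g t ∂μ‖ ≤ 1 := by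
    simpa only [smul_eq_mul, mul_smul_comm] using
      norm_integral_smul_two_smul_integral_sub_le_one hg hg_le hf hf_le
  have h_integral_mul : ‖∫ t, f t * g t ∂μ‖ ≤ 1 := by
    have h_mul_le : ∀ᵐ t ∂μ, ‖f t * g t‖ ≤ 1 := by
      filter_upwards [hf_le, hg_le] with t hft hgt
      rw [norm_mul]
      exact mul_le_one₀ hft (norm_nonneg _) hgt
    simpa using norm_integral_le_of_norm_le_const h_mul_le
  simpa only [Complex.real_smul] using norm_smul_sub_smul_le_max h_reflect h_integral_mul s b

theorem generalized_zalcman_hull_starlike_general {Ω : Type*} [MeasurableSpace Ω] {ν : Measure Ω}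
    [IsProbabilityMeasure ν] {u : Ω → ℂ} (hu : AEStronglyMeasurable u ν)
    (hu_le : ∀ᵐ t ∂ν, ‖u t‖ ≤ 1) {A : ℕ → ℝ} {a : ℕ → ℂ}
    (ha : ∀ n, 2 ≤ n → a n = A n * ∫ t, u t ^ (n - 1) ∂ν) (lam : ℝ) {n m : ℕ}
    (hn : 2 ≤ n) (hm : 2 ≤ m) :
    ‖(lam : ℂ) * a n * a m - a (n + m - 1)‖ ≤
      max |A (n + m - 1)| |lam * A n * A m - A (n + m - 1)| := by
  have hpow_le (k : ℕ) : ∀ᵐ t ∂ν, ‖u t ^ k‖ ≤ 1 := hu_le.mono fun t ht ↦ by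
    rw [norm_pow]
    exact pow_le_one₀ (norm_nonneg _) ht
  have h_bound := norm_mul_integral_mul_integral_sub_le_max (hu.pow (n - 1)) (hpow_le (n - 1))
    (hu.pow (m - 1)) (hpow_le (m - 1)) (lam * A n * A m) (A (n + m - 1))
  have h_index : n + m - 1 - 1 = (n - 1) + (m - 1) := by lia
  rw [ha n hn, ha m hm, ha (n + m - 1) (by lia), h_index]
  simp_rw [pow_add]
  simp only [Pi.pow_apply] at h_bound
  convert h_bound using 2
  push_cast
  ring

theorem prod_range_add_div_factorial_pos {x : ℝ} (hx : 0 < x) (k : ℕ) :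
    0 < (∏ j ∈ Finset.range k, (x + (j : ℝ))) / (Nat.factorial k : ℝ) :=
  div_pos (Finset.prod_pos fun _ _ ↦ by positivity) (by positivity)

theorem max_abs_abs_mul_sub_eq_left {l b p : ℝ} (hp : 0 < p) (hl_nonneg : 0 ≤ l)
    (hl_le : l ≤ 2 * b / p) : max |b| |l * p - b| = b := by
  have h_nonneg : 0 ≤ l * p := by positivity
  have h_le : l * p ≤ 2 * b := (le_div_iff₀ hp).1 hl_le
  rw [abs_of_nonneg (by linarith : 0 ≤ b), max_eq_left]
  exact abs_le.2 ⟨by linarith, by linarith⟩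

theorem max_abs_abs_mul_sub_eq_right {l b p : ℝ} (hb : 0 ≤ b) (hp : 0 < p)
    (hl : l < 0 ∨ 2 * b / p < l) : max |b| |l * p - b| = |l * p - b| := by
  rw [abs_of_nonneg hb, max_eq_right]
  rcases hl with hl_neg | hl_gt
  · have h_neg : l * p < 0 := mul_neg_of_neg_of_pos hl_neg hp
    exact le_abs.2 (.inr (by linarith))
  · have h_gt : 2 * b < l * p := (div_lt_iff₀ hp).1 hl_gt
    exact le_abs.2 (.inl (by linarith))

theorem generalized_zalcman_hull_starlike
    (α : ℝ) (hα : α < 1) (A : ℕ → ℝ)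
    (hA : ∀ n, A n = (∏ j ∈ Finset.range (n - 1), (2 * (1 - α) + (j : ℝ))) /
      (Nat.factorial (n - 1) : ℝ))
    (ν : Measure (Set.Icc (0 : ℝ) (2 * Real.pi))) [IsProbabilityMeasure ν]
    (a : ℕ → ℂ)
    (ha : ∀ n, 2 ≤ n →
      a n = (A n : ℂ) * ∫ t, Complex.exp (Complex.I * (n - 1 : ℕ) * ((t : ℝ) : ℂ)) ∂ν)
    (lam : ℝ) (n m : ℕ) (hn : 2 ≤ n) (hm : 2 ≤ m) :
    (0 ≤ lam ∧ lam ≤ 2 * A (n + m - 1) / (A n * A m) →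
      ‖(lam : ℂ) * a n * a m - a (n + m - 1)‖ ≤ A (n + m - 1)) ∧
    (lam < 0 ∨ 2 * A (n + m - 1) / (A n * A m) < lam →
      ‖(lam : ℂ) * a n * a m - a (n + m - 1)‖ ≤ |lam * A n * A m - A (n + m - 1)|) := by
  have hA_pos (k : ℕ) : 0 < A k := by
    rw [hA]
    exact prod_range_add_div_factorial_pos (by linarith) (k - 1)
  have hA_mul_pos : 0 < A n * A m := mul_pos (hA_pos n) (hA_pos m)
  have h_bound := generalized_zalcman_hull_starlike_general (ν := ν) (A := A) (a := a)
    (u := fun t ↦ Complex.exp (Complex.I * (t : ℝ)))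
    (by fun_prop) (.of_forall fun t ↦ (Complex.norm_exp_I_mul_ofReal t).le)
    (fun k hk ↦ by simp_rw [ha k hk, ← Complex.exp_nat_mul, mul_left_comm, mul_assoc])
    lam hn hm
  rw [mul_assoc lam] at h_bound ⊢
  exact ⟨fun h ↦ h_bound.trans_eq (max_abs_abs_mul_sub_eq_left hA_mul_pos h.1 h.2),
    fun h ↦ h_bound.trans_eq (max_abs_abs_mul_sub_eq_right (hA_pos _).le hA_mul_pos h)⟩
end

section
/- Fix a real number α < 1 and for n ≥ 2 set A_n = (1/(n−1)!)·∏_{j=0}^{n−2} (2(1−α)+j). Suppose the complex numbers (a_n)_{n≥2} satisfy a_n = (A_n/n) · ∫₀^{2π} e^{i(n−1)t} dν(t) for all n ≥ 2, for some probability measure ν on [0,2π]. Then for every real λ and all integers n, m ≥ 2: |λ a_n a_m − a_{n+m−1}| ≤ A_{n+m−1}/(n+m−1) whenever 0 ≤ λ ≤ 2nm·A_{n+m−1}/((n+m−1)·A_n A_m), and |λ a_n a_m − a_{n+m−1}| ≤ |λ·A_n A_m/(nm) − A_{n+m−1}/(n+m−1)| whenever λ < 0 or λ > 2nm·A_{n+m−1}/((n+m−1)·A_n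 A_m). -/
open MeasureTheory

/-!
Write `x = ∫ u ^ j` and `y = ∫ u ^ k` for moments of a random variable `u` in the closed unit disc.
The covariance `∫ u ^ (j + k) - x * y` is at most the mean of the variances of `u ^ j` and `u ^ k`,
hence at most `1 - (‖x‖ ^ 2 + ‖y‖ ^ 2) / 2 ≤ 1 - ‖x * y‖`. Splitting
`p * (x * y) - q * ∫ u ^ (j + k)` as `(p - q) * (x * y) - q * (∫ u ^ (j + k) - x * y)` therefore
bounds it by `max |q| |p - q|`, and the sign of `λ` together with the threshold on `λ` decides
which of the two terms is the maximum.
-/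

section Covariance

variable {Ω : Type*} [MeasurableSpace Ω] {ν : Measure Ω} {𝕜 : Type*} [RCLike 𝕜]

variable (𝕜) in
lemma integral_norm_sub_integral_sq [IsProbabilityMeasure ν] {E : Type*} [NormedAddCommGroup E]
    [InnerProductSpace 𝕜 E] [NormedSpace ℝ E] [CompleteSpace E] {u : Ω → E} (hu : MemLp u 2 ν) :
    ∫ t, ‖u t - ∫ s, u s ∂ν‖ ^ 2 ∂ν = ∫ t, ‖u t‖ ^ 2 ∂ν - ‖∫ t, u t ∂ν‖ ^ 2 := by
  set x := ∫ s, u s ∂ν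
  have hu_int : Integrable u ν := hu.integrable one_le_two
  have hu_sq : Integrable (fun t => ‖u t‖ ^ 2) ν := hu.integrable_norm_pow two_ne_zero
  have hu_inner : Integrable (fun t => RCLike.re (inner 𝕜 x (u t))) ν :=
    (hu_int.const_inner x).re
  have integral_re_inner_mean : ∫ t, RCLike.re (inner 𝕜 x (u t)) ∂ν = ‖x‖ ^ 2 := by
    rw [integral_re (hu_int.const_inner x), integral_inner hu_int, inner_self_eq_norm_sq]
  calc ∫ t, ‖u t - x‖ ^ 2 ∂ν
      = ∫ t, (‖u t‖ ^ 2 - 2 * RCLike.re (inner 𝕜 x (u t)) + ‖x‖ ^ 2) ∂ν := by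
        simp_rw [norm_sub_sq (𝕜 := 𝕜), inner_re_symm (𝕜 := 𝕜) (u _) x]
    _ = ∫ t, ‖u t‖ ^ 2 ∂ν - 2 * ‖x‖ ^ 2 + ‖x‖ ^ 2 := by
        rw [integral_add (by fun_prop) (integrable_const _),
          integral_sub hu_sq (hu_inner.const_mul 2), integral_const_mul, integral_re_inner_mean,
          integral_const, probReal_univ, one_smul]
    _ = ∫ t, ‖u t‖ ^ 2 ∂ν - ‖x‖ ^ 2 := by ring

variable {u v : Ω → 𝕜}

lemma integral_sub_integral_mul_sub_integral [IsProbabilityMeasure ν]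
    (hu : Integrable u ν) (hv : Integrable v ν) (huv : Integrable (fun t => u t * v t) ν) :
    ∫ t, (u t - ∫ s, u s ∂ν) * (v t - ∫ s, v s ∂ν) ∂ν =
      ∫ t, u t * v t ∂ν - (∫ t, u t ∂ν) * ∫ t, v t ∂ν := by
  set x := ∫ s, u s ∂ν
  set y := ∫ s, v s ∂ν
  have expand (t : Ω) : (u t - x) * (v t - y) = u t * v t - u t * y - x * (v t - y) := by ring
  have integral_centered : ∫ t, (v t - y) ∂ν = 0 := by
    rw [integral_sub hv (integrable_const _), integral_const, probReal_univ, one_smul, sub_self]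
  simp_rw [expand]
  rw [integral_sub (by fun_prop) (by fun_prop), integral_sub huv (by fun_prop), integral_mul_const,
    integral_const_mul, integral_centered, mul_zero, sub_zero]

lemma norm_integral_mul_le_half_add (hu : MemLp u 2 ν) (hv : MemLp v 2 ν) :
    ‖∫ t, u t * v t ∂ν‖ ≤ (∫ t, ‖u t‖ ^ 2 ∂ν + ∫ t, ‖v t‖ ^ 2 ∂ν) / 2 := by
  have hu_sq : Integrable (fun t => ‖u t‖ ^ 2) ν := hu.integrable_norm_pow two_ne_zero
  have hv_sq : Integrable (fun t => ‖v t‖ ^ 2) ν := hv.integrable_norm_pow two_ne_zero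
  rw [← integral_add hu_sq hv_sq, ← integral_div]
  refine norm_integral_le_of_norm_le ((hu_sq.add hv_sq).div_const 2) (.of_forall fun t => ?_)
  rw [norm_mul]
  linarith [two_mul_le_add_sq ‖u t‖ ‖v t‖]

variable [IsProbabilityMeasure ν]

lemma integral_norm_sub_integral_sq_le_one_sub (hu : AEStronglyMeasurable u ν)
    (hu_le : ∀ᵐ t ∂ν, ‖u t‖ ≤ 1) :
    ∫ t, ‖u t - ∫ s, u s ∂ν‖ ^ 2 ∂ν ≤ 1 - ‖∫ t, u t ∂ν‖ ^ 2 := by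
  have hu_memLp : MemLp u 2 ν := .of_bound hu 1 hu_le
  have second_moment_le : ∫ t, ‖u t‖ ^ 2 ∂ν ≤ 1 := by
    calc ∫ t, ‖u t‖ ^ 2 ∂ν ≤ ∫ _, (1 : ℝ) ∂ν :=
          integral_mono_ae (hu_memLp.integrable_norm_pow two_ne_zero) (integrable_const 1)
            (hu_le.mono fun t ht => pow_le_one₀ (norm_nonneg _) ht)
      _ = 1 := by simp
  rw [integral_norm_sub_integral_sq 𝕜 hu_memLp]
  linarith

lemma norm_integral_mul_integral_add_norm_covariance_le_one
    (hu : AEStronglyMeasurable u ν) (hv : AEStronglyMeasurable v ν)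
    (hu_le : ∀ᵐ t ∂ν, ‖u t‖ ≤ 1) (hv_le : ∀ᵐ t ∂ν, ‖v t‖ ≤ 1) :
    ‖(∫ t, u t ∂ν) * ∫ t, v t ∂ν‖ +
      ‖∫ t, u t * v t ∂ν - (∫ t, u t ∂ν) * ∫ t, v t ∂ν‖ ≤ 1 := by
  have hu_memLp : MemLp u 2 ν := .of_bound hu 1 hu_le
  have hv_memLp : MemLp v 2 ν := .of_bound hv 1 hv_le
  rw [← integral_sub_integral_mul_sub_integral (hu_memLp.integrable one_le_two)
    (hv_memLp.integrable one_le_two) (hu_memLp.integrable_mul hv_memLp), norm_mul]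
  have covariance_le := norm_integral_mul_le_half_add
    (hu_memLp.sub (memLp_const (∫ s, u s ∂ν))) (hv_memLp.sub (memLp_const (∫ s, v s ∂ν)))
  simp only [Pi.sub_apply] at covariance_le
  linarith [integral_norm_sub_integral_sq_le_one_sub hu hu_le,
    integral_norm_sub_integral_sq_le_one_sub hv hv_le,
    two_mul_le_add_sq ‖∫ t, u t ∂ν‖ ‖∫ t, v t ∂ν‖]

end Covariance

lemma norm_smul_sub_smul_le_max_s2 {E : Type*} [SeminormedAddCommGroup E] [NormedSpace ℝ E]
    {w z : E} (h : ‖w‖ + ‖z - w‖ ≤ 1) (p q : ℝ) :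
    ‖p • w - q • z‖ ≤ max |q| |p - q| := by
  calc ‖p • w - q • z‖ = ‖(p - q) • w - q • (z - w)‖ := by congr 1; module
    _ ≤ |p - q| * ‖w‖ + |q| * ‖z - w‖ := by
        simpa only [norm_smul, Real.norm_eq_abs] using norm_sub_le ((p - q) • w) (q • (z - w))
    _ ≤ max |q| |p - q| * ‖w‖ + max |q| |p - q| * ‖z - w‖ := by
        gcongr
        · exact le_max_right _ _
        · exact le_max_left _ _
    _ = max |q| |p - q| * (‖w‖ + ‖z - w‖) := by ring
    _ ≤ max |q| |p - q| := mul_le_of_le_one_right (by positivity) h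

lemma norm_smul_integral_pow_mul_sub_le_max {Ω : Type*} [MeasurableSpace Ω] {ν : Measure Ω}
    [IsProbabilityMeasure ν] {𝕜 : Type*} [RCLike 𝕜] {u : Ω → 𝕜} (hu : AEStronglyMeasurable u ν)
    (hu_le : ∀ᵐ t ∂ν, ‖u t‖ ≤ 1) (p q : ℝ) (j k : ℕ) :
    ‖p • ((∫ t, u t ^ j ∂ν) * ∫ t, u t ^ k ∂ν) - q • ∫ t, u t ^ (j + k) ∂ν‖ ≤
      max |q| |p - q| := by
  have pow_le (i : ℕ) : ∀ᵐ t ∂ν, ‖u t ^ i‖ ≤ 1 :=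
    hu_le.mono fun t ht => (norm_pow_le _ i).trans (pow_le_one₀ (norm_nonneg _) ht)
  simp_rw [pow_add]
  exact norm_smul_sub_smul_le_max_s2 (norm_integral_mul_integral_add_norm_covariance_le_one
    (hu.pow j) (hu.pow k) (pow_le j) (pow_le k)) p q

lemma abs_mul_sub_le_self_iff {c : ℝ} (hc : 0 < c) (x q : ℝ) :
    |x * c - q| ≤ q ↔ 0 ≤ x ∧ x ≤ 2 * q / c := by
  rw [abs_le, le_div_iff₀ hc, ← mul_nonneg_iff_of_pos_right hc]
  constructor <;> rintro ⟨_, _⟩ <;> constructor <;> linarith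

lemma prod_range_add_natCast_div_factorial_pos {x : ℝ} (hx : 0 < x) (k : ℕ) :
    0 < (∏ j ∈ Finset.range k, (x + (j : ℝ))) / (k.factorial : ℝ) :=
  div_pos (Finset.prod_pos fun j _ => by positivity) (by positivity)

lemma exp_I_mul_natCast_mul_eq_pow (k : ℕ) (z : ℂ) :
    Complex.exp (Complex.I * k * z) = Complex.exp (z * Complex.I) ^ k := by
  rw [← Complex.exp_nat_mul]
  congr 1
  ring

theorem generalized_zalcman_hull_convex_general {Ω : Type*} [MeasurableSpace Ω] {ν : Measure Ω}
    [IsProbabilityMeasure ν] {u : Ω → ℂ} (hu : AEStronglyMeasurable u ν)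
    (hu_le : ∀ᵐ t ∂ν, ‖u t‖ ≤ 1) {A : ℕ → ℝ} (hA : ∀ k, 2 ≤ k → 0 < A k) {a : ℕ → ℂ}
    (ha : ∀ k, 2 ≤ k → a k = ((A k : ℂ) / (k : ℂ)) * ∫ t, u t ^ (k - 1) ∂ν)
    (lam : ℝ) {n m : ℕ} (hn : 2 ≤ n) (hm : 2 ≤ m) :
    (0 ≤ lam ∧
        lam ≤ 2 * n * m * A (n + m - 1) / (((n : ℝ) + m - 1) * (A n * A m)) →
      ‖(lam : ℂ) * a n * a m - a (n + m - 1)‖ ≤ A (n + m - 1) / ((n : ℝ) + m - 1)) ∧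
    (lam < 0 ∨ 2 * n * m * A (n + m - 1) / (((n : ℝ) + m - 1) * (A n * A m)) < lam →
      ‖(lam : ℂ) * a n * a m - a (n + m - 1)‖ ≤
        |lam * (A n * A m) / ((n : ℝ) * m) - A (n + m - 1) / ((n : ℝ) + m - 1)|) := by
  have hN : 2 ≤ n + m - 1 := by lia
  have cast_N : ((n + m - 1 : ℕ) : ℝ) = (n : ℝ) + m - 1 := by
    rw [Nat.cast_sub (by lia), Nat.cast_add, Nat.cast_one]
  have hAn := hA n hn
  have hAm := hA m hm
  have hAN := hA _ hN
  rw [← cast_N, mul_div_assoc lam]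
  set N := n + m - 1
  set c := A n * A m / ((n : ℝ) * m) with hc
  set q := A N / (N : ℝ) with hq
  have c_pos : 0 < c := by positivity
  have q_pos : 0 < q := by positivity
  have threshold_eq : 2 * n * m * A N / (N * (A n * A m)) = 2 * q / c := by
    rw [hc, hq]
    field_simp
  have norm_le_max : ‖(lam : ℂ) * a n * a m - a N‖ ≤ max q |lam * c - q| := by
    have functional_eq : (lam : ℂ) * a n * a m - a N =
        (lam * c) • ((∫ t, u t ^ (n - 1) ∂ν) * ∫ t, u t ^ (m - 1) ∂ν) -
          q • ∫ t, u t ^ (n - 1 + (m - 1)) ∂ν := by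
      rw [ha n hn, ha m hm, ha N hN, show n - 1 + (m - 1) = N - 1 by lia, hc, hq]
      simp only [Complex.real_smul]
      push_cast
      ring
    rw [functional_eq]
    simpa only [abs_of_pos q_pos] using
      norm_smul_integral_pow_mul_sub_le_max hu hu_le (lam * c) q (n - 1) (m - 1)
  rw [threshold_eq]
  refine ⟨fun h => ?_, fun h => ?_⟩
  · rwa [max_eq_left ((abs_mul_sub_le_self_iff c_pos lam q).2 h)] at norm_le_max
  · have outside : ¬ (0 ≤ lam ∧ lam ≤ 2 * q / c) := by simpa only [not_and_or, not_le] using h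
    rw [← abs_mul_sub_le_self_iff c_pos, not_le] at outside
    rwa [max_eq_right outside.le] at norm_le_max

theorem generalized_zalcman_hull_convex
    (α : ℝ) (hα : α < 1) (A : ℕ → ℝ)
    (hA : ∀ n, A n = (∏ j ∈ Finset.range (n - 1), (2 * (1 - α) + (j : ℝ))) /
      (Nat.factorial (n - 1) : ℝ))
    (ν : Measure (Set.Icc (0 : ℝ) (2 * Real.pi))) [IsProbabilityMeasure ν]
    (a : ℕ → ℂ)
    (ha : ∀ n, 2 ≤ n →
      a n = ((A n : ℂ) / (n : ℂ)) *
        ∫ t, Complex.exp (Complex.I * (n - 1 : ℕ) * ((t : ℝ) : ℂ)) ∂ν)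
    (lam : ℝ) (n m : ℕ) (hn : 2 ≤ n) (hm : 2 ≤ m) :
    (0 ≤ lam ∧
        lam ≤ 2 * n * m * A (n + m - 1) / (((n : ℝ) + m - 1) * (A n * A m)) →
      ‖(lam : ℂ) * a n * a m - a (n + m - 1)‖ ≤ A (n + m - 1) / ((n : ℝ) + m - 1)) ∧
    (lam < 0 ∨ 2 * n * m * A (n + m - 1) / (((n : ℝ) + m - 1) * (A n * A m)) < lam →
      ‖(lam : ℂ) * a n * a m - a (n + m - 1)‖ ≤
        |lam * (A n * A m) / ((n : ℝ) * m) - A (n + m - 1) / ((n : ℝ) + m - 1)|) := by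
  simp only [exp_I_mul_natCast_mul_eq_pow] at ha
  exact generalized_zalcman_hull_convex_general (ν := ν)
    (Continuous.aestronglyMeasurable (by fun_prop))
    (.of_forall fun t => (Complex.norm_exp_ofReal_mul_I t).le)
    (fun k _ => hA k ▸ prod_range_add_natCast_div_factorial_pos (by linarith) (k - 1)) ha lam hn hm
end

section
/- Fix a real number β < 1, and let f(z) = z + Σ_{n≥2} a_n zⁿ be analytic on the open unit disc 𝔻 = {z ∈ ℂ : |z| < 1} with Re f′(z) > β for all z ∈ 𝔻. Then for every real λ and all integers n, m ≥ 2: |λ a_n a_m − a_{n+m−1}| ≤ 2(1−β)/(n+m−1) whenever 0 ≤ λ ≤ nm/((1−β)(n+m−1)), and |λ a_n a_m − a_{n+m−1}| ≤ |4λ(1−β)²/(nm) − 2(1−β)/(n+m−1)| whenever λ < 0 or λ > nm/((1−β)(n+m−1)). -/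
/-!
The normalised derivative `p = (f' - β) / (1 - β)` is a Carathéodory function, so by the
Herglotz–Riesz theorem its coefficients are twice the Fourier coefficients of a probability
measure `μ` on the circle; here `μ` arises as a weak limit of the measures with density
`Re p (r e^{iθ})` as `r → 1`. Subtracting twice the mean is an isometry of `L²(μ)`, whence
`|∫ u v - 2 ∫ u ∫ v| ≤ 1` for unimodular `u, v`, that is, Livingston's inequality
`|bᵢ bⱼ - bᵢ₊ⱼ| ≤ 2`. Since `λ aₙ aₘ - aₙ₊ₘ₋₁` is a positive multiple of `t bᵢ bⱼ - bᵢ₊ⱼ` with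
`i = n - 1`, `j = m - 1`, `t = λ (1 - β) (n + m - 1) / (n m)`, the theorem follows from this
together with `|bₖ| ≤ 2` by convexity for `t ∈ [0, 1]` and by the triangle inequality otherwise.
-/

open MeasureTheory AddCircle ComplexConjugate Filter Topology
open scoped NNReal RealInnerProductSpace

section Moments

variable {X : Type*} [MeasurableSpace X] {μ : Measure X} [IsProbabilityMeasure μ]

theorem integral_norm_sub_two_smul_integral_sq {E : Type*} [NormedAddCommGroup E]
    [InnerProductSpace ℝ E] [CompleteSpace E] {v : X → E} (hv : MemLp v 2 μ) :
    ∫ x, ‖v x - (2 : ℝ) • ∫ y, v y ∂μ‖ ^ 2 ∂μ = ∫ x, ‖v x‖ ^ 2 ∂μ := by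
  set M := ∫ y, v y ∂μ with hM
  have hvint : Integrable v μ := hv.integrable one_le_two
  have hsq : Integrable (fun x ↦ ‖v x‖ ^ 2) μ := hv.integrable_norm_pow two_ne_zero
  have hinner : Integrable (fun x ↦ 4 * ⟪M, v x⟫) μ := (hvint.const_inner M).const_mul 4
  have expand (x : X) : ‖v x - (2 : ℝ) • M‖ ^ 2 = ‖v x‖ ^ 2 - (4 * ⟪M, v x⟫ - 4 * ‖M‖ ^ 2) := by
    rw [norm_sub_sq_real, inner_smul_right, norm_smul, real_inner_comm, Real.norm_ofNat]
    ring
  have cancel : ∫ x, (4 * ⟪M, v x⟫ - 4 * ‖M‖ ^ 2) ∂μ = 0 := by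
    rw [integral_sub hinner (integrable_const _), integral_const_mul, integral_inner hvint, ← hM]
    simp
  have hdiff : Integrable (fun x ↦ 4 * ⟪M, v x⟫ - 4 * ‖M‖ ^ 2) μ := hinner.sub (integrable_const _)
  simp_rw [expand]
  rw [integral_sub hsq hdiff, cancel, sub_zero]

theorem norm_integral_mul_sub_two_mul_integral_mul_integral_le {u v : X → ℂ}
    (hu : MemLp u 2 μ) (hv : MemLp v 2 μ) :
    ‖∫ x, u x * v x ∂μ - 2 * (∫ x, u x ∂μ) * ∫ x, v x ∂μ‖ ≤
      (∫ x, ‖u x‖ ^ 2 ∂μ + ∫ x, ‖v x‖ ^ 2 ∂μ) / 2 := by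
  set w : X → ℂ := fun x ↦ v x - (2 : ℝ) • ∫ y, v y ∂μ
  have hw : MemLp w 2 μ := hv.sub (memLp_const _)
  have amgm (x : X) : ‖u x * w x‖ ≤ (‖u x‖ ^ 2 + ‖w x‖ ^ 2) / 2 := by
    rw [norm_mul]
    linarith [two_mul_le_add_sq ‖u x‖ ‖w x‖]
  have hu2 : Integrable (fun x ↦ ‖u x‖ ^ 2) μ := hu.integrable_norm_pow two_ne_zero
  have hw2 : Integrable (fun x ↦ ‖w x‖ ^ 2) μ := hw.integrable_norm_pow two_ne_zero
  have huv : Integrable (fun x ↦ u x * v x) μ := hu.integrable_mul hv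
  calc ‖∫ x, u x * v x ∂μ - 2 * (∫ x, u x ∂μ) * ∫ x, v x ∂μ‖
      = ‖∫ x, u x * w x ∂μ‖ := by
        simp only [w, mul_sub]
        rw [integral_sub huv ((hu.integrable one_le_two).mul_const _),
          integral_mul_const, Complex.real_smul, Complex.ofReal_ofNat]
        ring_nf
    _ ≤ ∫ x, (‖u x‖ ^ 2 + ‖w x‖ ^ 2) / 2 ∂μ :=
        norm_integral_le_of_norm_le ((hu2.add hw2).div_const 2) (.of_forall amgm)
    _ = (∫ x, ‖u x‖ ^ 2 ∂μ + ∫ x, ‖v x‖ ^ 2 ∂μ) / 2 := by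
        rw [integral_div, integral_add hu2 hw2, integral_norm_sub_two_smul_integral_sq hv]

end Moments

section Segment

variable {E : Type*} [SeminormedAddCommGroup E] [NormedSpace ℝ E] {w c : E} {M t : ℝ}

theorem norm_smul_sub_le_of_mem_Icc (hc : ‖c‖ ≤ M) (hwc : ‖w - c‖ ≤ M) (ht : t ∈ Set.Icc 0 1) :
    ‖t • w - c‖ ≤ M := by
  calc ‖t • w - c‖ = ‖t • (w - c) - (1 - t) • c‖ := by congr 1; module
    _ ≤ t * ‖w - c‖ + (1 - t) * ‖c‖ := by
        refine (norm_sub_le _ _).trans_eq ?_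
        rw [norm_smul_of_nonneg ht.1, norm_smul_of_nonneg (sub_nonneg.2 ht.2)]
    _ ≤ t * M + (1 - t) * M := by
        have := sub_nonneg.2 ht.2
        have := ht.1
        gcongr
    _ = M := by ring

theorem norm_smul_sub_le_abs_mul (hw : ‖w‖ ≤ 2 * M) (hc : ‖c‖ ≤ M) (hwc : ‖w - c‖ ≤ M)
    (ht : t ≤ 0 ∨ 1 ≤ t) : ‖t • w - c‖ ≤ |2 * t - 1| * M := by
  rcases ht with hnonpos | hone
  · calc ‖t • w - c‖ ≤ -t * ‖w‖ + ‖c‖ := by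
          refine (norm_sub_le _ _).trans_eq ?_
          rw [norm_smul, Real.norm_of_nonpos hnonpos]
      _ ≤ -t * (2 * M) + M := by
          have := neg_nonneg.2 hnonpos
          gcongr
      _ = |2 * t - 1| * M := by rw [abs_of_nonpos (by linarith)]; ring
  · calc ‖t • w - c‖ = ‖(t - 1) • w + (w - c)‖ := by congr 1; module
      _ ≤ (t - 1) * ‖w‖ + ‖w - c‖ := by
          refine (norm_add_le _ _).trans_eq ?_
          rw [norm_smul_of_nonneg (sub_nonneg.2 hone)]
      _ ≤ (t - 1) * (2 * M) + M := by
          have := sub_nonneg.2 hone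
          gcongr
      _ = |2 * t - 1| * M := by rw [abs_of_nonneg (by linarith)]; ring

end Segment

section Fourier

variable {T : ℝ}

theorem norm_fourier_apply (n : ℤ) (x : AddCircle T) : ‖fourier n x‖ = 1 := Circle.norm_coe _

theorem fourier_one_pow (k : ℕ) (x : AddCircle T) : (fourier 1 x : ℂ) ^ k = fourier (k : ℤ) x := by
  rw [fourier_one, fourier_apply, natCast_zsmul, toCircle_nsmul, Circle.coe_pow]

variable [Fact (0 < T)]

theorem hasSum_fourierCoeff {ι : Type*} {F : ι → C(AddCircle T, ℂ)} {g : C(AddCircle T, ℂ)}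
    (hF : HasSum F g) (n : ℤ) :
    HasSum (fun i ↦ fourierCoeff (F i) n) (fourierCoeff g n) := by
  have eval (f : C(AddCircle T, ℂ)) : fourierCoeff f n =
      (innerSL ℂ (fourierBasis n) ∘L ContinuousMap.toLp 2 haarAddCircle ℂ) f := by
    rw [← fourierCoeff_toLp, ← fourierBasis_repr, HilbertBasis.repr_apply_apply]
    rfl
  simp_rw [eval]
  exact ContinuousLinearMap.hasSum _ hF

theorem hasSum_fourierCoeff_of_hasSum_smul_fourier {ι : Type*} {s : ι → ℤ} {c : ι → ℂ}
    {g : C(AddCircle T, ℂ)} (hg : HasSum (fun i ↦ c i • fourier (s i)) g) (n : ℤ) :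
    HasSum (fun i ↦ if s i = n then c i else 0) (fourierCoeff g n) := by
  convert hasSum_fourierCoeff hg n using 2 with i
  rw [ContinuousMap.coe_smul, fourierCoeff.const_smul, fourierCoeff_fourier]
  simp [Pi.single_apply, eq_comm]

theorem fourierCoeff_natCast_of_hasSum {c : ℕ → ℂ} {g : C(AddCircle T, ℂ)}
    (hg : HasSum (fun k : ℕ ↦ c k • fourier (k : ℤ)) g) (k : ℕ) : fourierCoeff g k = c k := by
  refine (hasSum_fourierCoeff_of_hasSum_smul_fourier hg k).unique ?_
  convert hasSum_ite_eq k (c k) using 3 with l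
  · simp
  · grind

theorem fourierCoeff_neg_natCast_of_hasSum {c : ℕ → ℂ} {g : C(AddCircle T, ℂ)}
    (hg : HasSum (fun k : ℕ ↦ c k • fourier (k : ℤ)) g) {k : ℕ} (hk : k ≠ 0) :
    fourierCoeff g (-k) = 0 := by
  refine (hasSum_fourierCoeff_of_hasSum_smul_fourier hg (-k)).unique ?_
  convert hasSum_zero with l
  grind

theorem fourierCoeff_conj (g : AddCircle T → ℂ) (n : ℤ) :
    fourierCoeff (fun x ↦ conj (g x)) n = conj (fourierCoeff g (-n)) := by
  simp only [fourierCoeff, ← integral_conj, smul_eq_mul, map_mul, fourier_neg, neg_neg]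

theorem fourierCoeff_ofReal_re {g : AddCircle T → ℂ} (hg : Integrable g haarAddCircle) (n : ℤ) :
    fourierCoeff (fun x ↦ ((g x).re : ℂ)) n =
      (fourierCoeff g n + conj (fourierCoeff g (-n))) / 2 := by
  have hconj : Integrable (fun x ↦ conj (g x)) haarAddCircle :=
    Complex.conjCLE.toContinuousLinearMap.integrable_comp hg
  have hre : (fun x ↦ ((g x).re : ℂ)) = (2⁻¹ : ℂ) • (g + fun x ↦ conj (g x)) := by
    ext x
    simp only [Complex.re_eq_add_conj, Pi.smul_apply, Pi.add_apply, smul_eq_mul]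
    ring
  rw [hre, fourierCoeff.const_smul, fourierCoeff.add hg hconj, Pi.add_apply, fourierCoeff_conj,
    smul_eq_mul]
  ring

theorem integral_fourier_neg_withDensity {h : AddCircle T → ℝ} (hmeas : Measurable h)
    (hnonneg : ∀ x, 0 ≤ h x) (n : ℤ) :
    ∫ x, fourier (-n) x ∂haarAddCircle.withDensity (fun x ↦ ENNReal.ofReal (h x)) =
      fourierCoeff (fun x ↦ (h x : ℂ)) n := by
  rw [integral_withDensity_eq_integral_toReal_smul hmeas.ennreal_ofReal (by simp)]
  simp only [ENNReal.toReal_ofReal (hnonneg _), fourierCoeff, Complex.real_smul, smul_eq_mul,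
    mul_comm]

theorem exists_probabilityMeasure_of_hasSum_of_re_nonneg {c : ℕ → ℂ} {g : C(AddCircle T, ℂ)}
    (hg : HasSum (fun k : ℕ ↦ c k • fourier (k : ℤ)) g) (hc : c 0 = 1)
    (hre : ∀ x, 0 ≤ (g x).re) :
    ∃ μ : ProbabilityMeasure (AddCircle T),
      ∀ k : ℕ, k ≠ 0 → ∫ x, fourier (-k) x ∂(μ : Measure (AddCircle T)) = c k / 2 := by
  have hint : Integrable g haarAddCircle :=
    g.continuous.integrable_of_hasCompactSupport (.of_compactSpace g)
  set ν : Measure (AddCircle T) :=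
    haarAddCircle.withDensity fun x ↦ ENNReal.ofReal (g x).re with hν
  have moment (n : ℤ) : ∫ x, fourier (-n) x ∂ν =
      (fourierCoeff g n + conj (fourierCoeff g (-n))) / 2 := by
    rw [hν, integral_fourier_neg_withDensity (by fun_prop) hre, fourierCoeff_ofReal_re hint]
  have hmass : ν.real Set.univ = 1 := by
    have hcoeff : fourierCoeff g 0 = 1 := by
      simpa [hc] using fourierCoeff_natCast_of_hasSum hg 0
    simpa [hcoeff] using moment 0
  have hprob : IsProbabilityMeasure ν := isProbabilityMeasure_iff_real.2 hmass
  refine ⟨⟨ν, hprob⟩, fun k hk ↦ ?_⟩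
  rw [ProbabilityMeasure.coe_mk, moment, fourierCoeff_natCast_of_hasSum hg,
    fourierCoeff_neg_natCast_of_hasSum hg hk]
  simp

end Fourier

section PowerSeries

variable {𝕜 : Type*} [RCLike 𝕜] {f : 𝕜 → 𝕜} {a : ℕ → 𝕜} {R : ℝ≥0}

theorem hasFPowerSeriesOnBall_ofScalars_of_hasSum (hR : 0 < R)
    (hf : ∀ z ∈ Metric.ball (0 : 𝕜) R, HasSum (fun k ↦ a k * z ^ k) (f z)) :
    HasFPowerSeriesOnBall f (FormalMultilinearSeries.ofScalars 𝕜 a) 0 R where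
  r_le := by
    refine ENNReal.le_of_forall_nnreal_lt fun r hr ↦ ?_
    refine FormalMultilinearSeries.le_radius_of_summable _ ?_
    have hrR : ((r : ℝ) : 𝕜) ∈ Metric.ball (0 : 𝕜) R := by simpa using hr
    simpa [FormalMultilinearSeries.ofScalars_norm] using (hf _ hrR).summable.norm
  r_pos := by exact_mod_cast hR
  hasSum {y} hy := by
    rw [Metric.eball_coe] at hy
    simpa [FormalMultilinearSeries.ofScalars_apply_eq, mul_comm] using hf y hy

theorem hasSum_deriv_of_hasSum_mul_pow
    (hf : ∀ z ∈ Metric.ball (0 : 𝕜) R, HasSum (fun k ↦ a k * z ^ k) (f z))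
    {z : 𝕜} (hz : z ∈ Metric.ball (0 : 𝕜) R) :
    HasSum (fun k : ℕ ↦ (k + 1) * a (k + 1) * z ^ k) (deriv f z) := by
  have hR : 0 < R := by exact_mod_cast Metric.pos_of_mem_ball hz
  have hfd := (hasFPowerSeriesOnBall_ofScalars_of_hasSum hR hf).fderiv
  have hsum := (hfd.hasSum (by rwa [Metric.eball_coe])).mapL (ContinuousLinearMap.apply 𝕜 𝕜 (1 : 𝕜))
  simpa [FormalMultilinearSeries.apply_eq_pow_smul_coeff, mul_comm] using hsum

end PowerSeries

/-- The Carathéodory class: functions `p` on the open unit disc with power series `∑ b k * z ^ k`,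
`p 0 = 1` and nonnegative real part. The coefficient sequence `b` is carried explicitly because the
coefficient estimates are stated about it. -/
structure IsCaratheodory (p : ℂ → ℂ) (b : ℕ → ℂ) : Prop where
  coeff_zero : b 0 = 1
  hasSum : ∀ z ∈ Metric.ball (0 : ℂ) 1, HasSum (fun k ↦ b k * z ^ k) (p z)
  re_nonneg : ∀ z ∈ Metric.ball (0 : ℂ) 1, 0 ≤ (p z).re

namespace IsCaratheodory

variable {p : ℂ → ℂ} {b : ℕ → ℂ}

theorem exists_measure_integral_fourier_eq_mul_pow (h : IsCaratheodory p b) (T : ℝ)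
    [Fact (0 < T)] {r : ℝ} (hr0 : 0 ≤ r) (hr1 : r < 1) :
    ∃ μ : ProbabilityMeasure (AddCircle T), ∀ k : ℕ, k ≠ 0 →
      ∫ x, fourier (-k) x ∂(μ : Measure (AddCircle T)) = b k * r ^ k / 2 := by
  have hsummable : Summable fun k : ℕ ↦ (b k * r ^ k) • fourier (T := T) k := by
    have hr : (r : ℂ) ∈ Metric.ball (0 : ℂ) 1 := by simpa [abs_of_nonneg hr0] using hr1
    refine .of_norm ?_
    simpa only [norm_smul, fourier_norm, mul_one] using (h.hasSum r hr).summable.norm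
  refine exists_probabilityMeasure_of_hasSum_of_re_nonneg hsummable.hasSum
    (by simp [h.coeff_zero]) fun x ↦ ?_
  have hmem : r * fourier 1 x ∈ Metric.ball (0 : ℂ) 1 := by
    rwa [mem_ball_zero_iff, norm_mul, norm_fourier_apply, mul_one, Complex.norm_of_nonneg hr0]
  have heval : (∑' k : ℕ, (b k * r ^ k) • fourier (T := T) k) x = p (r * fourier 1 x) := by
    refine (ContinuousMap.hasSum_apply hsummable.hasSum x).unique ?_
    simpa only [mul_pow, fourier_one_pow, mul_assoc, ContinuousMap.smul_apply, smul_eq_mul]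
      using h.hasSum _ hmem
  rw [heval]
  exact h.re_nonneg _ hmem

theorem exists_measure_integral_fourier_eq (h : IsCaratheodory p b) (T : ℝ) [Fact (0 < T)] :
    ∃ μ : ProbabilityMeasure (AddCircle T), ∀ k : ℕ, k ≠ 0 →
      ∫ x, fourier (-k) x ∂(μ : Measure (AddCircle T)) = b k / 2 := by
  obtain ⟨r, -, hr, hrlim⟩ := exists_seq_strictMono_tendsto' (zero_lt_one' ℝ)
  choose μ hμ using fun n ↦
    h.exists_measure_integral_fourier_eq_mul_pow T (hr n).1.le (hr n).2
  obtain ⟨ν, φ, hφ, hν⟩ := SeqCompactSpace.tendsto_subseq μ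
  refine ⟨ν, fun k hk ↦ ?_⟩
  have hmoment := (ProbabilityMeasure.tendsto_iff_forall_integral_rclike_tendsto ℂ).1 hν
    (BoundedContinuousFunction.mkOfCompact (fourier (-k)))
  have hcoeff : Tendsto (fun n ↦ b k * (r (φ n) : ℂ) ^ k / 2) atTop (𝓝 (b k * 1 ^ k / 2)) :=
    (((Complex.continuous_ofReal.tendsto' 1 1 rfl).comp
      (hrlim.comp hφ.tendsto_atTop)).pow k).const_mul (b k) |>.div_const 2
  rw [one_pow, mul_one] at hcoeff
  refine tendsto_nhds_unique hmoment (hcoeff.congr fun n ↦ ?_)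
  exact (hμ (φ n) k hk).symm

theorem norm_coeff_le_two (h : IsCaratheodory p b) {k : ℕ} (hk : k ≠ 0) : ‖b k‖ ≤ 2 := by
  obtain ⟨μ, hμ⟩ := h.exists_measure_integral_fourier_eq 1
  have hle : ‖b k / 2‖ ≤ 1 := by
    rw [← hμ k hk]
    simpa using norm_integral_le_of_norm_le_const (μ := (μ : Measure UnitAddCircle))
      (.of_forall fun x ↦ (norm_fourier_apply (-k) x).le)
  rw [norm_div, Complex.norm_ofNat] at hle
  linarith

theorem norm_coeff_mul_coeff_sub_coeff_add_le_two (h : IsCaratheodory p b)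
    {i j : ℕ} (hi : i ≠ 0) (hj : j ≠ 0) :
    ‖b i * b j - b (i + j)‖ ≤ 2 := by
  obtain ⟨μ, hμ⟩ := h.exists_measure_integral_fourier_eq 1
  have memLp (n : ℤ) : MemLp (fourier (T := 1) n) 2 (μ : Measure UnitAddCircle) :=
    .of_bound (map_continuous _).aestronglyMeasurable 1
      (.of_forall fun x ↦ (norm_fourier_apply n x).le)
  have hle := norm_integral_mul_sub_two_mul_integral_mul_integral_le (memLp (-i)) (memLp (-j))
  have hadd : -(i : ℤ) + -j = -((i + j : ℕ) : ℤ) := by push_cast; ring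
  simp only [← fourier_add, hadd, hμ i hi, hμ j hj, hμ (i + j) (by omega), norm_fourier_apply]
    at hle
  have hscale : b (i + j) / 2 - 2 * (b i / 2) * (b j / 2) = -((b i * b j - b (i + j)) / 2) := by
    ring
  rw [hscale, norm_neg, norm_div, Complex.norm_ofNat] at hle
  norm_num only [one_pow, integral_const, probReal_univ, smul_eq_mul] at hle
  linarith

theorem norm_mul_coeff_mul_coeff_sub_coeff_add_le_two (h : IsCaratheodory p b)
    {i j : ℕ} (hi : i ≠ 0) (hj : j ≠ 0) {t : ℝ} (ht : t ∈ Set.Icc 0 1) :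
    ‖(t : ℂ) * (b i * b j) - b (i + j)‖ ≤ 2 :=
  norm_smul_sub_le_of_mem_Icc (h.norm_coeff_le_two (by omega))
    (h.norm_coeff_mul_coeff_sub_coeff_add_le_two hi hj) ht

theorem norm_mul_coeff_mul_coeff_sub_coeff_add_le_abs_mul_two (h : IsCaratheodory p b)
    {i j : ℕ} (hi : i ≠ 0) (hj : j ≠ 0) {t : ℝ} (ht : t ≤ 0 ∨ 1 ≤ t) :
    ‖(t : ℂ) * (b i * b j) - b (i + j)‖ ≤ |2 * t - 1| * 2 := by
  have hprod : ‖b i * b j‖ ≤ 2 * 2 :=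
    norm_mul_le_of_le (h.norm_coeff_le_two hi) (h.norm_coeff_le_two hj)
  exact norm_smul_sub_le_abs_mul hprod (h.norm_coeff_le_two (by omega))
    (h.norm_coeff_mul_coeff_sub_coeff_add_le_two hi hj) ht

end IsCaratheodory

/-- The Taylor coefficients of `(f' - β) / (1 - β)` for `f z = z + ∑_{k ≥ 2} a k * z ^ k`, which
turn membership of `f` in `R(β)` into membership in the Carathéodory class. The constant
coefficient is set to `1`, its value when `a 1 = 1`. -/
noncomputable def normalizedDerivCoeff (β : ℝ) (a : ℕ → ℂ) : ℕ → ℂ :=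
  Function.update (fun k ↦ (k + 1) * a (k + 1) / (1 - β)) 0 1

section RBeta

variable {β : ℝ} {a : ℕ → ℂ}

theorem isCaratheodory_normalizedDeriv (hβ : β < 1) {f : ℂ → ℂ} (ha : a 1 = 1)
    (hf : ∀ z ∈ Metric.ball (0 : ℂ) 1, HasSum (fun k ↦ a k * z ^ k) (f z))
    (hre : ∀ z ∈ Metric.ball (0 : ℂ) 1, β ≤ (deriv f z).re) :
    IsCaratheodory (fun z ↦ (deriv f z - β) / (1 - β)) (normalizedDerivCoeff β a) where
  coeff_zero := Function.update_self ..
  hasSum z hz := by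
    have hβc : (1 - β : ℂ) ≠ 0 := by exact_mod_cast (sub_pos.2 hβ).ne'
    have hderiv := (hasSum_deriv_of_hasSum_mul_pow (R := 1) (by simpa using hf)
      (by simpa using hz)).div_const (1 - β : ℂ)
    convert! hderiv.update 0 1 using 1
    · ext k
      rcases eq_or_ne k 0 with rfl | hk
      · simp [normalizedDerivCoeff]
      · rw [normalizedDerivCoeff, Function.update_of_ne hk, Function.update_of_ne hk]
        ring
    · simp only [Nat.cast_zero, zero_add, ha, pow_zero]
      field_simp
      ring
  re_nonneg z hz := by
    rw [← Complex.ofReal_one, ← Complex.ofReal_sub, Complex.div_ofReal_re, Complex.sub_re,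
      Complex.ofReal_re]
    exact div_nonneg (sub_nonneg.2 (hre z hz)) (sub_pos.2 hβ).le

theorem coeff_succ_eq_mul_normalizedDerivCoeff (a : ℕ → ℂ) (hβ : β ≠ 1) {k : ℕ} (hk : k ≠ 0) :
    a (k + 1) = (1 - β) / (k + 1) * normalizedDerivCoeff β a k := by
  have hβc : (1 - β : ℂ) ≠ 0 := by exact_mod_cast sub_ne_zero.2 hβ.symm
  have hkc : (k + 1 : ℂ) ≠ 0 := k.cast_add_one_ne_zero
  rw [normalizedDerivCoeff, Function.update_of_ne hk]
  field_simp

theorem mul_coeff_mul_coeff_sub_coeff_eq (hβ : β ≠ 1) {n m : ℕ} (hn : 2 ≤ n) (hm : 2 ≤ m)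
    (lam : ℝ) :
    (lam : ℂ) * a n * a m - a (n + m - 1) =
      ((1 - β) / ((n : ℝ) + m - 1) : ℝ) *
        ((lam / ((n : ℝ) * m / ((1 - β) * ((n : ℝ) + m - 1))) : ℝ) *
          (normalizedDerivCoeff β a (n - 1) * normalizedDerivCoeff β a (m - 1)) -
            normalizedDerivCoeff β a (n - 1 + (m - 1))) := by
  obtain ⟨i, rfl⟩ : ∃ i, n = i + 1 := ⟨n - 1, by omega⟩
  obtain ⟨j, rfl⟩ : ∃ j, m = j + 1 := ⟨m - 1, by omega⟩
  have hindex : i + 1 + (j + 1) - 1 = i + j + 1 := by omega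
  have hcast : (i + 1 + (j + 1) - 1 : ℂ) = i + j + 1 := by ring
  have hi : (i + 1 : ℂ) ≠ 0 := i.cast_add_one_ne_zero
  have hj : (j + 1 : ℂ) ≠ 0 := j.cast_add_one_ne_zero
  have hij : (i + j + 1 : ℂ) ≠ 0 := by exact_mod_cast (i + j).succ_ne_zero
  have hβc : (1 - β : ℂ) ≠ 0 := by exact_mod_cast sub_ne_zero.2 hβ.symm
  rw [hindex, coeff_succ_eq_mul_normalizedDerivCoeff a hβ (k := i) (by omega),
    coeff_succ_eq_mul_normalizedDerivCoeff a hβ (k := j) (by omega),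
    coeff_succ_eq_mul_normalizedDerivCoeff a hβ (k := i + j) (by omega)]
  push_cast
  rw [hcast]
  field_simp

end RBeta

theorem generalized_zalcman_Rbeta
    (β : ℝ) (hβ : β < 1) (f : ℂ → ℂ) (a : ℕ → ℂ)
    (ha0 : a 0 = 0) (ha1 : a 1 = 1)
    (hf : ∀ z ∈ Metric.ball (0 : ℂ) 1, HasSum (fun k => a k * z ^ k) (f z))
    (hre : ∀ z ∈ Metric.ball (0 : ℂ) 1, β < (deriv f z).re)
    (lam : ℝ) (n m : ℕ) (hn : 2 ≤ n) (hm : 2 ≤ m) :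
    (0 ≤ lam ∧ lam ≤ (n : ℝ) * m / ((1 - β) * ((n : ℝ) + m - 1)) →
      ‖(lam : ℂ) * a n * a m - a (n + m - 1)‖ ≤ 2 * (1 - β) / ((n : ℝ) + m - 1)) ∧
    (lam < 0 ∨ (n : ℝ) * m / ((1 - β) * ((n : ℝ) + m - 1)) < lam →
      ‖(lam : ℂ) * a n * a m - a (n + m - 1)‖ ≤
        |4 * lam * (1 - β) ^ 2 / ((n : ℝ) * m) - 2 * (1 - β) / ((n : ℝ) + m - 1)|) := by
  have hcar := isCaratheodory_normalizedDeriv hβ ha1 hf fun z hz ↦ (hre z hz).le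
  have hn1 : n - 1 ≠ 0 := by omega
  have hm1 : m - 1 ≠ 0 := by omega
  have hγ : 0 < 1 - β := sub_pos.2 hβ
  have hnm : (0 : ℝ) < n + m - 1 := sub_pos.2 (by exact_mod_cast (by omega : 1 < n + m))
  have hscale : 0 < (1 - β) / ((n : ℝ) + m - 1) := by positivity
  rw [mul_coeff_mul_coeff_sub_coeff_eq hβ.ne hn hm, norm_mul, Complex.norm_of_nonneg hscale.le]
  set τ : ℝ := (n : ℝ) * m / ((1 - β) * ((n : ℝ) + m - 1)) with hτ
  have hτ_pos : 0 < τ := by positivity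
  refine ⟨fun ⟨hlam_nonneg, hlam_le⟩ ↦ ?_, fun hlam ↦ ?_⟩
  · rw [mul_comm 2 (1 - β), mul_div_right_comm]
    gcongr
    exact hcar.norm_mul_coeff_mul_coeff_sub_coeff_add_le_two hn1 hm1
      ⟨div_nonneg hlam_nonneg hτ_pos.le, (div_le_one hτ_pos).2 hlam_le⟩
  · have hfactor : 4 * lam * (1 - β) ^ 2 / ((n : ℝ) * m) - 2 * (1 - β) / ((n : ℝ) + m - 1) =
        (1 - β) / ((n : ℝ) + m - 1) * ((2 * (lam / τ) - 1) * 2) := by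
      rw [hτ]
      field_simp
      ring
    rw [hfactor, abs_mul, abs_mul, abs_of_pos hscale, abs_two]
    gcongr
    exact hcar.norm_mul_coeff_mul_coeff_sub_coeff_add_le_abs_mul_two hn1 hm1
      (hlam.imp (div_neg_of_neg_of_pos · hτ_pos |>.le) ((one_lt_div hτ_pos).2 · |>.le))
end

section
/- Let f(z) = z + Σ_{n≥2} a_n zⁿ be a typically real function on the open unit disc 𝔻 and let λ ≥ 1 be a real number. If m ≥ 2 is even, then |λ a_2 a_m − a_{m+1}| ≤ 3 + (2λ−1)(m−2) for 1 ≤ λ ≤ 3/2, and |λ a_2 a_m − a_{m+1}| ≤ 2λm − m − 1 for λ ≥ 3/2. -/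
/-!
Integrating `Im f` on the circle of radius `r < 1` against sine polynomials, and letting `r → 1`,
shows that the linear functional `sin (k x) ↦ a k` is nonnegative on every sine polynomial which is
nonnegative on `(0, π)`. It therefore satisfies a Jensen inequality for squares. With `t = cos x`
and `y = sin (m x) / (m sin x)` one has `sin ((m + 1) x) / sin x = m t y + cos (m x)`, so that
pointwise bounds of `λ m (t ± y) ^ 2` by `2 (D ± (m t y + cos (m x)))` yield `|λ a₂ aₘ - aₘ₊₁| ≤ D`.
Such bounds hold for `λ = 1`, `D = m + 1` and, when `m` is even, for `λ = 3 / 2`, `D = 2 m - 1`.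
The values of `λ` in between follow by convexity and the larger ones from `|a₂ aₘ| ≤ 2 m`.
-/

open MeasureTheory Set Real

section SineSeries

/-- The value at `x` of the sine polynomial `∑ c_k sin (k x)`, as a linear functional of its
finitely supported sequence of coefficients `c`. -/
noncomputable def sineSum (x : ℝ) : (ℕ →₀ ℝ) →ₗ[ℝ] ℝ :=
  Finsupp.linearCombination ℝ fun k : ℕ ↦ sin (k * x)

@[simp]
lemma sineSum_single (x : ℝ) (k : ℕ) (t : ℝ) :
    sineSum x (Finsupp.single k t) = t * sin (k * x) := by
  simp [sineSum]

lemma integral_cos_int_mul (j : ℤ) :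
    ∫ x in 0..π, cos (j * x) = if j = 0 then π else 0 := by
  split_ifs with hj
  · simp [hj]
  · have hj' : (j : ℝ) ≠ 0 := mod_cast hj
    simp [intervalIntegral.integral_comp_mul_left cos hj', sin_int_mul_pi]

lemma integral_sin_nat_mul_mul_sin_nat_mul (k : ℕ) {n : ℕ} (hn : n ≠ 0) :
    ∫ x in 0..π, sin (k * x) * sin (n * x) = if k = n then π / 2 else 0 := by
  have product_to_sum (x : ℝ) : sin (k * x) * sin (n * x) =
      (cos ((k - n : ℤ) * x) - cos ((k + n : ℤ) * x)) / 2 := by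
    push_cast
    rw [sub_mul, add_mul, ← two_mul_sin_mul_sin]
    ring
  have hadd : (k + n : ℤ) ≠ 0 := by omega
  simp_rw [product_to_sum]
  rw [intervalIntegral.integral_div, intervalIntegral.integral_sub
    (Continuous.intervalIntegrable (by fun_prop) _ _)
    (Continuous.intervalIntegrable (by fun_prop) _ _), integral_cos_int_mul, integral_cos_int_mul,
    if_neg hadd]
  simp [sub_eq_zero, ite_div]

variable {b : ℕ → ℝ} {g : ℝ → ℝ}

lemma continuous_of_hasSum_sin (hb : Summable b)
    (hg : ∀ x, HasSum (fun k : ℕ ↦ b k * sin (k * x)) (g x)) : Continuous g := by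
  have hg_eq : g = fun x ↦ ∑' k : ℕ, b k * sin (k * x) := funext fun x ↦ (hg x).tsum_eq.symm
  rw [hg_eq]
  refine continuous_tsum (fun k ↦ by fun_prop) hb.abs fun k x ↦ ?_
  rw [norm_eq_abs, abs_mul]
  exact mul_le_of_le_one_right (abs_nonneg _) (abs_sin_le_one _)

lemma integral_mul_sin_of_hasSum_sin (hb : Summable b)
    (hg : ∀ x, HasSum (fun k : ℕ ↦ b k * sin (k * x)) (g x)) {n : ℕ} (hn : n ≠ 0) :
    ∫ x in 0..π, g x * sin (n * x) = π / 2 * b n := by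
  have termwise : HasSum (fun k : ℕ ↦ ∫ x in 0..π, b k * sin (k * x) * sin (n * x))
      (∫ x in 0..π, g x * sin (n * x)) := by
    refine intervalIntegral.hasSum_integral_of_dominated_convergence (fun k _ ↦ |b k|)
      (fun k ↦ Continuous.aestronglyMeasurable (by fun_prop))
      (fun k ↦ .of_forall fun x _ ↦ ?_) (.of_forall fun _ _ ↦ hb.abs) (by simp)
      (.of_forall fun x _ ↦ (hg x).mul_right _)
    rw [norm_eq_abs, mul_assoc, abs_mul, abs_mul]
    exact mul_le_of_le_one_right (abs_nonneg _)
      (mul_le_one₀ (abs_sin_le_one _) (abs_nonneg _) (abs_sin_le_one _))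
  have orthogonality (k : ℕ) : ∫ x in 0..π, b k * sin (k * x) * sin (n * x) =
      if k = n then π / 2 * b n else 0 := by
    simp_rw [mul_assoc (b k)]
    rw [intervalIntegral.integral_const_mul, integral_sin_nat_mul_mul_sin_nat_mul k hn]
    split_ifs with hk
    · rw [hk, mul_comm]
    · rw [mul_zero]
  simp_rw [orthogonality] at termwise
  exact termwise.unique (hasSum_ite_eq n _)

lemma integral_mul_sineSum_of_hasSum_sin (hb : Summable b) (hb0 : b 0 = 0)
    (hg : ∀ x, HasSum (fun k : ℕ ↦ b k * sin (k * x)) (g x)) (c : ℕ →₀ ℝ) :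
    ∫ x in 0..π, g x * sineSum x c = π / 2 * Finsupp.linearCombination ℝ b c := by
  have hcont := continuous_of_hasSum_sin hb hg
  have coefficient (n : ℕ) : ∫ x in 0..π, g x * sin (n * x) = π / 2 * b n := by
    rcases eq_or_ne n 0 with rfl | hn
    · simp [hb0]
    · exact integral_mul_sin_of_hasSum_sin hb hg hn
  simp only [sineSum, Finsupp.linearCombination_apply, Finsupp.sum, smul_eq_mul, Finset.mul_sum]
  rw [intervalIntegral.integral_finsetSum
    fun n _ ↦ Continuous.intervalIntegrable (by fun_prop) _ _]
  refine Finset.sum_congr rfl fun n _ ↦ ?_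
  simp_rw [mul_left_comm _ (c n)]
  rw [intervalIntegral.integral_const_mul, coefficient]

end SineSeries

lemma pos_on_Ioo_of_integral_mul_pos {a b : ℝ} {g w : ℝ → ℝ}
    (hg : ContinuousOn g (Ioo a b)) (hne : ∀ x ∈ Ioo a b, g x ≠ 0)
    (hw : ∀ x ∈ Ioo a b, 0 ≤ w x) (hint : 0 < ∫ x in a..b, g x * w x) :
    ∀ x ∈ Ioo a b, 0 < g x := by
  by_contra! ⟨x₀, hx₀, hgx₀⟩
  have hg_nonpos : ∀ x ∈ Ioo a b, g x ≤ 0 := by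
    by_contra! ⟨x₁, hx₁, hgx₁⟩
    obtain ⟨y, hy, hgy⟩ :=
      isPreconnected_Ioo.intermediate_value hx₀ hx₁ hg ⟨hgx₀, hgx₁.le⟩
    exact hne y hy hgy
  rw [intervalIntegral.integral_of_le (hx₀.1.trans hx₀.2).le, integral_Ioc_eq_integral_Ioo] at hint
  exact hint.not_ge <| setIntegral_nonpos measurableSet_Ioo fun x hx ↦
    mul_nonpos_of_nonpos_of_nonneg (hg_nonpos x hx) (hw x hx)

/-- `f` is a typically real function on the unit disc with Taylor coefficients `a` at `0`.
Analyticity is encoded by the convergence of the Taylor series on the disc, and the coefficients,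
which are automatically real, are recorded as real numbers. -/
structure IsTypicallyReal (f : ℂ → ℂ) (a : ℕ → ℝ) : Prop where
  coeff_zero : a 0 = 0
  coeff_one : a 1 = 1
  hasSum : ∀ z ∈ Metric.ball (0 : ℂ) 1, HasSum (fun k ↦ (a k : ℂ) * z ^ k) (f z)
  im_eq_zero_iff : ∀ z ∈ Metric.ball (0 : ℂ) 1, (f z).im = 0 ↔ z.im = 0

namespace IsTypicallyReal

variable {f : ℂ → ℂ} {a : ℕ → ℝ} {r : ℝ}

lemma hasSum_im_circleMap (hf : IsTypicallyReal f a) (hr : |r| < 1) (x : ℝ) :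
    HasSum (fun k : ℕ ↦ a k * r ^ k * sin (k * x)) (f (circleMap 0 r x)).im := by
  have hmem : circleMap 0 r x ∈ Metric.ball (0 : ℂ) 1 := by simpa using hr
  convert Complex.hasSum_im (hf.hasSum _ hmem) using 2 with k
  have polar : (a k : ℂ) * circleMap 0 r x ^ k =
      ((a k * r ^ k : ℝ) : ℂ) * Complex.exp ((k * x : ℝ) * Complex.I) := by
    rw [circleMap_zero, mul_pow, ← Complex.exp_nat_mul]
    push_cast
    ring_nf
  rw [polar, Complex.im_ofReal_mul, Complex.exp_ofReal_mul_I_im]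

lemma summable_coeff_mul_pow (hf : IsTypicallyReal f a) (hr : |r| < 1) :
    Summable fun k ↦ a k * r ^ k := by
  have h := (hf.hasSum r (by simpa using hr)).summable
  exact_mod_cast h

lemma integral_im_mul_sineSum (hf : IsTypicallyReal f a) (hr : |r| < 1) (c : ℕ →₀ ℝ) :
    ∫ x in 0..π, (f (circleMap 0 r x)).im * sineSum x c =
      π / 2 * Finsupp.linearCombination ℝ (fun k ↦ a k * r ^ k) c :=
  integral_mul_sineSum_of_hasSum_sin (hf.summable_coeff_mul_pow hr) (by simp [hf.coeff_zero])
    (hf.hasSum_im_circleMap hr) c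

lemma im_circleMap_pos (hf : IsTypicallyReal f a) (hr : r ∈ Ioo 0 1) :
    ∀ x ∈ Ioo 0 π, 0 < (f (circleMap 0 r x)).im := by
  have hr' : |r| < 1 := (abs_of_pos hr.1).trans_lt hr.2
  refine pos_on_Ioo_of_integral_mul_pos (w := sin)
    (continuous_of_hasSum_sin (hf.summable_coeff_mul_pow hr')
      (hf.hasSum_im_circleMap hr')).continuousOn
    (fun x hx him ↦ ?_) (fun x hx ↦ (sin_pos_of_mem_Ioo hx).le) ?_
  · have him_circle : (circleMap 0 r x).im = r * sin x := by
      simp [circleMap, Complex.exp_ofReal_mul_I_im]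
    have him_zero := (hf.im_eq_zero_iff _ (by simpa using hr')).1 him
    exact (mul_pos hr.1 (sin_pos_of_mem_Ioo hx)).ne' (him_circle ▸ him_zero)
  · have first_coeff := hf.integral_im_mul_sineSum hr' (Finsupp.single 1 1)
    simp only [sineSum_single, Nat.cast_one, one_mul, Finsupp.linearCombination_single,
      hf.coeff_one, pow_one, smul_eq_mul] at first_coeff
    rw [first_coeff]
    exact mul_pos (by positivity) hr.1

theorem linearCombination_coeff_nonneg (hf : IsTypicallyReal f a) {c : ℕ →₀ ℝ}
    (hc : ∀ x ∈ Ioo 0 π, 0 ≤ sineSum x c) : 0 ≤ Finsupp.linearCombination ℝ a c := by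
  have nonneg_of_radius : ∀ r ∈ Ioo (0 : ℝ) 1,
      0 ≤ Finsupp.linearCombination ℝ (fun k ↦ a k * r ^ k) c := fun r hr ↦ by
    have hint := hf.integral_im_mul_sineSum ((abs_of_pos hr.1).trans_lt hr.2) c
    rw [intervalIntegral.integral_of_le pi_pos.le, integral_Ioc_eq_integral_Ioo] at hint
    refine nonneg_of_mul_nonneg_right (hint ▸ ?_) pi_div_two_pos
    exact setIntegral_nonneg measurableSet_Ioo fun x hx ↦
      mul_nonneg (hf.im_circleMap_pos hr x hx).le (hc x hx)
  have hcont : Continuous fun r : ℝ ↦ Finsupp.linearCombination ℝ (fun k ↦ a k * r ^ k) c := by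
    simp only [Finsupp.linearCombination_apply, Finsupp.sum]
    fun_prop
  have hlim := hcont.continuousWithinAt (s := Iio 1) (x := 1)
  simpa using ge_of_tendsto hlim
    (Filter.eventually_of_mem (Ioo_mem_nhdsLT one_pos) nonneg_of_radius)

theorem mul_sq_linearCombination_coeff_le (hf : IsTypicallyReal f a) {κ : ℝ} (hκ : 0 ≤ κ)
    {b c : ℕ →₀ ℝ} (h : ∀ x ∈ Ioo 0 π, κ * sineSum x b ^ 2 ≤ sineSum x c * sin x) :
    κ * Finsupp.linearCombination ℝ a b ^ 2 ≤ Finsupp.linearCombination ℝ a c := by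
  set d := Finsupp.linearCombination ℝ a b with hd
  -- `κ (P - d sin x)² ≥ 0` bounds the square below by an expression linear in `P = sineSum x b`.
  have tangent_nonneg := hf.linearCombination_coeff_nonneg
      (c := c - (2 * κ * d) • b + Finsupp.single 1 (κ * d ^ 2)) fun x hx ↦ by
    have hsin := sin_pos_of_mem_Ioo hx
    simp only [map_add, map_sub, map_smul, sineSum_single, Nat.cast_one, one_mul, smul_eq_mul]
    refine nonneg_of_mul_nonneg_left (b := sin x) ?_ hsin
    linarith [h x hx, mul_nonneg hκ (sq_nonneg (sineSum x b - d * sin x))]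
  simp only [map_add, map_sub, map_smul, Finsupp.linearCombination_single, smul_eq_mul,
    hf.coeff_one, ← hd] at tangent_nonneg
  linarith

end IsTypicallyReal

lemma abs_sin_nat_mul_le (n : ℕ) (x : ℝ) : |sin (n * x)| ≤ n * |sin x| := by
  induction n with
  | zero => simp
  | succ n ih =>
    calc |sin ((n + 1 : ℕ) * x)|
        = |sin (n * x) * cos x + cos (n * x) * sin x| := by
          rw [Nat.cast_succ, add_one_mul, sin_add]
      _ ≤ |sin (n * x)| * |cos x| + |cos (n * x)| * |sin x| := by
          simpa only [abs_mul] using abs_add_le (sin (n * x) * cos x) (cos (n * x) * sin x)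
      _ ≤ n * |sin x| * 1 + 1 * |sin x| := by
          gcongr
          exacts [abs_cos_le_one x, abs_cos_le_one _]
      _ = (n + 1 : ℕ) * |sin x| := by push_cast; ring

section SinRatio

/-- The normalised ratio `sin (m x) / (m sin x)`, the value of the Chebyshev polynomial `U_{m-1}`
at `cos x` divided by its maximum `m`. It takes the junk value `0` where `m * sin x = 0`. -/
noncomputable def sinRatio (m : ℕ) (x : ℝ) : ℝ := sin (m * x) / (m * sin x)

variable {m : ℕ} {x : ℝ}

lemma sin_nat_mul_eq_mul_sinRatio_mul_sin (m : ℕ) (hx : sin x ≠ 0) :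
    sin (m * x) = m * sinRatio m x * sin x := by
  rcases eq_or_ne m 0 with rfl | hm
  · simp
  · rw [sinRatio]
    field_simp

lemma sinRatio_sq_le_one (m : ℕ) (x : ℝ) : sinRatio m x ^ 2 ≤ 1 := by
  rw [sq_le_one_iff_abs_le_one, sinRatio, abs_div, abs_mul, Nat.abs_cast]
  exact div_le_one_of_le₀ (abs_sin_nat_mul_le m x) (by positivity)

lemma sinRatio_two_mul (h : ℕ) (x : ℝ) : sinRatio (2 * h) x = sinRatio h x * cos (h * x) := by
  rw [sinRatio, sinRatio, Nat.cast_mul, Nat.cast_two, mul_assoc, sin_two_mul, mul_assoc, mul_assoc,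
    mul_div_mul_left _ _ two_ne_zero, mul_div_right_comm]

lemma sinRatio_two (hx : sin x ≠ 0) : sinRatio 2 x = cos x := by
  simpa [sinRatio, hx] using sinRatio_two_mul 1 x

lemma sinRatio_pi_sub_of_even (hm : Even m) (x : ℝ) : sinRatio m (π - x) = -sinRatio m x := by
  simp [sinRatio, mul_sub, sin_nat_mul_pi_sub, hm.neg_one_pow, neg_div]

lemma neg_half_le_sinRatio (m : ℕ) (hx₀ : 0 < x) (hx₁ : x ≤ π / 2) : -(1 / 2) ≤ sinRatio m x := by
  have hsin : 0 ≤ sin x := sin_nonneg_of_nonneg_of_le_pi hx₀.le (by linarith)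
  rcases le_or_gt (m * x) π with hmx | hmx
  · have : 0 ≤ sinRatio m x :=
      div_nonneg (sin_nonneg_of_nonneg_of_le_pi (by positivity) hmx) (by positivity)
    linarith
  · have two_le : 2 ≤ m * sin x :=
      calc 2 = 2 / π * π := by field_simp
        _ ≤ 2 / π * (m * x) := by gcongr
        _ = m * (2 / π * x) := by ring
        _ ≤ m * sin x := by gcongr; exact mul_le_sin hx₀.le hx₁
    rw [sinRatio, le_div_iff₀ (by linarith)]
    linarith [neg_one_le_sin (m * x)]

lemma one_sub_cos_nat_mul_le (hm : Even m) (x : ℝ) :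
    1 - cos (m * x) ≤ m * (2 - cos x ^ 2 - sinRatio m x ^ 2) := by
  obtain ⟨h, rfl⟩ := hm.exists_two_nsmul
  rcases Nat.eq_zero_or_pos h with rfl | hh
  · simp
  have hh' : (1 : ℝ) ≤ h := mod_cast hh
  have ratio_sq_le : sinRatio (2 * h) x ^ 2 ≤ cos (h * x) ^ 2 := by
    rw [sinRatio_two_mul, mul_pow]
    exact mul_le_of_le_one_left (sq_nonneg _) (sinRatio_sq_le_one h x)
  calc 1 - cos ((2 • h : ℕ) * x) = 2 * (1 - cos (h * x) ^ 2) := by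
        rw [smul_eq_mul, Nat.cast_mul, Nat.cast_two, mul_assoc, cos_two_mul]
        ring
    _ ≤ 2 * h * (1 - cos (h * x) ^ 2) := by
        gcongr
        · linarith [cos_sq_le_one (h * x)]
        · linarith
    _ ≤ (2 • h : ℕ) * (2 - cos x ^ 2 - sinRatio (2 • h) x ^ 2) := by
        rw [smul_eq_mul, Nat.cast_mul, Nat.cast_two]
        gcongr
        linarith [cos_sq_le_one x]

lemma three_mul_cos_sq_add_sinRatio_sq_le_of_le_pi_div_two (m : ℕ) (hx₀ : 0 < x)
    (hx₁ : x ≤ π / 2) :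
    3 * (cos x ^ 2 + sinRatio m x ^ 2) ≤ 6 + 2 * (cos x * sinRatio m x) := by
  have hcos : 0 ≤ cos x := cos_nonneg_of_mem_Icc ⟨by linarith, hx₁⟩
  have hratio := neg_half_le_sinRatio m hx₀ hx₁
  rcases le_or_gt 0 (sinRatio m x) with hpos | hneg
  · linarith [cos_sq_le_one x, sinRatio_sq_le_one m x, mul_nonneg hcos hpos]
  · nlinarith [cos_le_one x]

lemma three_mul_cos_sq_add_sinRatio_sq_le (hm : Even m) (hx : x ∈ Ioo 0 π) :
    3 * (cos x ^ 2 + sinRatio m x ^ 2) ≤ 6 + 2 * (cos x * sinRatio m x) := by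
  rcases le_or_gt x (π / 2) with hx' | hx'
  · exact three_mul_cos_sq_add_sinRatio_sq_le_of_le_pi_div_two m hx.1 hx'
  · simpa [sinRatio_pi_sub_of_even hm] using
      three_mul_cos_sq_add_sinRatio_sq_le_of_le_pi_div_two m (x := π - x)
        (by linarith [hx.2]) (by linarith)

lemma four_mul_one_add_cos_nat_mul_le (hm : Even m) (hm₀ : m ≠ 0) (hx : x ∈ Ioo 0 π) :
    4 * (1 + cos (m * x)) ≤
      m * (8 + 2 * (cos x * sinRatio m x) - 3 * (cos x ^ 2 + sinRatio m x ^ 2)) := by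
  rcases eq_or_ne m 2 with rfl | hm₂
  · rw [sinRatio_two (sin_pos_of_mem_Ioo hx).ne', Nat.cast_two, cos_two_mul]
    linarith [cos_sq_le_one x]
  · have four_le : 4 ≤ m := by grind
    calc 4 * (1 + cos (m * x)) ≤ (4 : ℕ) * 2 := by
          push_cast
          linarith [cos_le_one (m * x)]
      _ ≤ m * (8 + 2 * (cos x * sinRatio m x) - 3 * (cos x ^ 2 + sinRatio m x ^ 2)) := by
          gcongr
          linarith [three_mul_cos_sq_add_sinRatio_sq_le hm hx]

end SinRatio

namespace IsTypicallyReal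

variable {f : ℂ → ℂ} {a : ℕ → ℝ} {m : ℕ}

theorem abs_coeff_le (hf : IsTypicallyReal f a) (n : ℕ) : |a n| ≤ n := by
  have sin_bound (x : ℝ) (hx : x ∈ Ioo 0 π) : |sin (n * x)| ≤ n * sin x :=
    abs_of_pos (sin_pos_of_mem_Ioo hx) ▸ abs_sin_nat_mul_le n x
  have upper := hf.linearCombination_coeff_nonneg
    (c := Finsupp.single 1 (n : ℝ) + Finsupp.single n (-1)) fun x hx ↦ by
      simpa using (abs_le.1 (sin_bound x hx)).2
  have lower := hf.linearCombination_coeff_nonneg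
    (c := Finsupp.single 1 (n : ℝ) + Finsupp.single n 1) fun x hx ↦ by
      simpa using neg_le_iff_add_nonneg'.1 (abs_le.1 (sin_bound x hx)).1
  simp only [map_add, Finsupp.linearCombination_single, hf.coeff_one, smul_eq_mul] at upper lower
  exact abs_le.2 ⟨by linarith, by linarith⟩

theorem mul_coeff_two_mul_coeff_sub_le (hf : IsTypicallyReal f a) (hm : m ≠ 0) {lam D ε : ℝ}
    (hlam : 0 ≤ lam)
    (h : ∀ x ∈ Ioo 0 π, lam * m * (cos x + ε * sinRatio m x) ^ 2 ≤
      2 * (D + ε * (m * cos x * sinRatio m x + cos (m * x)))) :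
    ε * (lam * a 2 * a m - a (m + 1)) ≤ D := by
  have hsq := hf.mul_sq_linearCombination_coeff_le hlam
    (b := Finsupp.single 2 (m : ℝ) + Finsupp.single m (2 * ε))
    (c := (8 * m : ℝ) • (Finsupp.single 1 D + Finsupp.single (m + 1) ε)) fun x hx ↦ by
      have hsin := sin_pos_of_mem_Ioo hx
      have := mul_le_mul_of_nonneg_left (h x hx) (show 0 ≤ 4 * m * sin x ^ 2 by positivity)
      simp only [map_add, map_smul, sineSum_single, Nat.cast_one, one_mul, smul_eq_mul,
        Nat.cast_ofNat, Nat.cast_add, add_mul, sin_two_mul, sin_add,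
        sin_nat_mul_eq_mul_sinRatio_mul_sin m hsin.ne']
      linarith
  simp only [map_add, map_smul, Finsupp.linearCombination_single, smul_eq_mul, hf.coeff_one] at hsq
  have am_gm := mul_nonneg hlam (sq_nonneg (m * a 2 - 2 * ε * a m))
  refine le_of_mul_le_mul_left (a := 8 * (m : ℝ)) ?_ (by positivity)
  linarith

theorem abs_coeff_two_mul_coeff_sub_le (hf : IsTypicallyReal f a) (hm : m ≠ 0) :
    |a 2 * a m - a (m + 1)| ≤ m + 1 := by
  have cos_ratio_sq_le (x : ℝ) : m * (cos x ^ 2 + sinRatio m x ^ 2) ≤ m * 2 := by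
    gcongr
    linarith [cos_sq_le_one x, sinRatio_sq_le_one m x]
  have upper := hf.mul_coeff_two_mul_coeff_sub_le hm (lam := 1) (D := m + 1) (ε := 1) zero_le_one
    fun x _ ↦ by linarith [cos_ratio_sq_le x, neg_one_le_cos (m * x)]
  have lower := hf.mul_coeff_two_mul_coeff_sub_le hm (lam := 1) (D := m + 1) (ε := -1) zero_le_one
    fun x _ ↦ by linarith [cos_ratio_sq_le x, cos_le_one (m * x)]
  exact abs_le'.2 ⟨by linarith, by linarith⟩

theorem abs_three_halves_mul_coeff_two_mul_coeff_sub_le (hf : IsTypicallyReal f a) (hm : Even m)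
    (hm₀ : m ≠ 0) : |3 / 2 * a 2 * a m - a (m + 1)| ≤ 2 * m - 1 := by
  have upper := hf.mul_coeff_two_mul_coeff_sub_le hm₀ (lam := 3 / 2) (D := 2 * m - 1) (ε := 1)
    (by norm_num) fun x _ ↦ by
      linarith [one_sub_cos_nat_mul_le hm x,
        mul_nonneg m.cast_nonneg (sq_nonneg (cos x - sinRatio m x))]
  have lower := hf.mul_coeff_two_mul_coeff_sub_le hm₀ (lam := 3 / 2) (D := 2 * m - 1) (ε := -1)
    (by norm_num) fun x hx ↦ by linarith [four_mul_one_add_cos_nat_mul_le hm hm₀ hx]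
  exact abs_le'.2 ⟨by linarith, by linarith⟩

theorem abs_coeff_two_mul_coeff_le (hf : IsTypicallyReal f a) (m : ℕ) :
    |a 2 * a m| ≤ 2 * m := by
  rw [abs_mul]
  exact mul_le_mul (mod_cast hf.abs_coeff_le 2) (hf.abs_coeff_le m) (abs_nonneg _) zero_le_two

end IsTypicallyReal

lemma abs_mul_add_mul_le {R : Type*} [CommRing R] [LinearOrder R] [IsStrictOrderedRing R]
    {u v x y X Y : R} (hu : 0 ≤ u) (hv : 0 ≤ v) (hx : |x| ≤ X) (hy : |y| ≤ Y) :
    |u * x + v * y| ≤ u * X + v * Y := by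
  refine (abs_add_le _ _).trans ?_
  rw [abs_mul, abs_mul, abs_of_nonneg hu, abs_of_nonneg hv]
  gcongr

theorem zalcman_typically_real_n2_m_even
    (f : ℂ → ℂ) (a : ℕ → ℝ)
    (ha0 : a 0 = 0) (ha1 : a 1 = 1)
    (hf : ∀ z ∈ Metric.ball (0 : ℂ) 1, HasSum (fun k => (a k : ℂ) * z ^ k) (f z))
    (htr : ∀ z ∈ Metric.ball (0 : ℂ) 1, ((f z).im = 0 ↔ z.im = 0))
    (lam : ℝ) (hlam : 1 ≤ lam) (m : ℕ) (hm : 2 ≤ m) (hme : Even m) :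
    (1 ≤ lam ∧ lam ≤ 3 / 2 →
      |lam * a 2 * a m - a (m + 1)| ≤ 3 + (2 * lam - 1) * ((m : ℝ) - 2)) ∧
    (3 / 2 ≤ lam →
      |lam * a 2 * a m - a (m + 1)| ≤ 2 * lam * m - m - 1) := by
  have hf' : IsTypicallyReal f a := ⟨ha0, ha1, hf, htr⟩
  have hm₀ : m ≠ 0 := by omega
  have at_one := hf'.abs_coeff_two_mul_coeff_sub_le hm₀
  have at_three_halves := hf'.abs_three_halves_mul_coeff_two_mul_coeff_sub_le hme hm₀
  have product := hf'.abs_coeff_two_mul_coeff_le m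
  refine ⟨fun ⟨_, hlam'⟩ ↦ ?_, fun hlam' ↦ ?_⟩
  · have h₁ : 0 ≤ 3 - 2 * lam := by linarith only [hlam']
    have h₂ : 0 ≤ 2 * lam - 2 := by linarith
    calc |lam * a 2 * a m - a (m + 1)|
        = |(3 - 2 * lam) * (a 2 * a m - a (m + 1))
            + (2 * lam - 2) * (3 / 2 * a 2 * a m - a (m + 1))| := by ring_nf
      _ ≤ _ := abs_mul_add_mul_le h₁ h₂ at_one at_three_halves
      _ = _ := by ring
  · calc |lam * a 2 * a m - a (m + 1)|
        = |(lam - 3 / 2) * (a 2 * a m) + 1 * (3 / 2 * a 2 * a m - a (m + 1))| := by ring_nf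
      _ ≤ _ := abs_mul_add_mul_le (sub_nonneg.2 hlam') zero_le_one product at_three_halves
      _ = _ := by ring
end
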